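/- Let F be a Minkowski norm on ℝⁿ, let Ω ⊆ ℝⁿ be an open set with smooth boundary such that Ω^c is bounded, let 1 < p < n, and let v_p be the positive C¹ weak solution of div(F(∇v)^{p−1} F_ξ(∇v)) = 0 in Ω with v_p = 1 on ∂Ω and v_p → 0 at infinity. Then F(∇v_p(x))/v_p(x) → 0 as |x| → +∞. -/

import Mathlib

open MeasureTheory Filter Topology Metric Set
open scoped RealInnerProductSpace NNReal

noncomputable section

abbrev En (n : ℕ) := EuclideanSpace ℝ (Fin n)

/-- A Minkowski norm on ℝⁿ: a norm (convex, even, 1-homogeneous, positive away from 0)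
which is smooth away from the origin and whose Hessian of `F²/2` is positive definite
on `ℝⁿ \ {0}`. -/
structure MinkowskiNorm (n : ℕ) where
  F : En n → ℝ
  convexOn : ConvexOn ℝ Set.univ F
  even : ∀ ξ, F (-ξ) = F ξ
  homog : ∀ c : ℝ, 0 ≤ c → ∀ ξ, F (c • ξ) = c * F ξ
  pos : ∀ ξ : En n, ξ ≠ 0 → 0 < F ξ
  smooth : ContDiffOn ℝ (⊤ : ℕ∞) F {(0 : En n)}ᶜ
  elliptic : ∀ ξ : En n, ξ ≠ 0 → ∀ v : En n, v ≠ 0 →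
    0 < fderiv ℝ (fun x => fderiv ℝ (fun y => F y ^ 2 / 2) x) ξ v v

/-- Locally Lipschitz on a set (i.e. `C^{0,1}_loc`). -/
def LocLipOn {n : ℕ} (f : En n → ℝ) (s : Set (En n)) : Prop :=
  ∀ x ∈ s, ∃ (K : ℝ≥0) (t : Set (En n)), t ∈ nhdsWithin x s ∧ LipschitzOnWith K f t

/-- Weak solution of `div(F_ξ(∇u)) = F(∇u)` in `Ω` in the sense of Huisken–Ilmanen's
minimization principle. -/
def IsWeakSolIAMCF {n : ℕ} (N : MinkowskiNorm n) (Ω : Set (En n)) (u : En n → ℝ) : Prop :=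
  LocLipOn u Ω ∧
  ∀ K : Set (En n), IsCompact (closure K) → closure K ⊆ Ω →
    ∀ φ : En n → ℝ, LocLipOn φ Ω → (∀ x ∈ Ω \ K, φ x = u x) →
      (∫ x in K, (N.F (gradient u x) + u x * N.F (gradient u x))) ≤
        ∫ x in K, (N.F (gradient φ x) + φ x * N.F (gradient u x))

/-- Weak subsolution: the minimization inequality holds for competitors `φ ≤ u`. -/
def IsWeakSubSolIAMCF {n : ℕ} (N : MinkowskiNorm n) (Ω : Set (En n)) (u : En n → ℝ) : Prop :=
  LocLipOn u Ω ∧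
  ∀ K : Set (En n), IsCompact (closure K) → closure K ⊆ Ω →
    ∀ φ : En n → ℝ, LocLipOn φ Ω → (∀ x ∈ Ω \ K, φ x = u x) → (∀ x ∈ Ω, φ x ≤ u x) →
      (∫ x in K, (N.F (gradient u x) + u x * N.F (gradient u x))) ≤
        ∫ x in K, (N.F (gradient φ x) + φ x * N.F (gradient u x))

/-- Weak supersolution: the minimization inequality holds for competitors `φ ≥ u`. -/
def IsWeakSuperSolIAMCF {n : ℕ} (N : MinkowskiNorm n) (Ω : Set (En n)) (u : En n → ℝ) : Prop :=
  LocLipOn u Ω ∧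
  ∀ K : Set (En n), IsCompact (closure K) → closure K ⊆ Ω →
    ∀ φ : En n → ℝ, LocLipOn φ Ω → (∀ x ∈ Ω \ K, φ x = u x) → (∀ x ∈ Ω, u x ≤ φ x) →
      (∫ x in K, (N.F (gradient u x) + u x * N.F (gradient u x))) ≤
        ∫ x in K, (N.F (gradient φ x) + φ x * N.F (gradient u x))

/-- A smooth compactly supported test function on `Ω`. -/
def IsTestFun {n : ℕ} (Ω : Set (En n)) (ψ : En n → ℝ) : Prop :=
  ContDiff ℝ (⊤ : ℕ∞) ψ ∧ HasCompactSupport ψ ∧ tsupport ψ ⊆ Ω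

/-- Weak solution of the Finsler `p`-Laplace equation `div(F(∇v)^{p-1} F_ξ(∇v)) = 0` in `Ω`. -/
def IsWeakPHarmonic {n : ℕ} (N : MinkowskiNorm n) (Ω : Set (En n)) (p : ℝ)
    (v : En n → ℝ) : Prop :=
  ∀ ψ : En n → ℝ, IsTestFun Ω ψ →
    (∫ x in Ω, N.F (gradient v x) ^ (p - 1) *
      ⟪gradient N.F (gradient v x), gradient ψ x⟫) = 0

/-- Weak solution of `div(F(∇u)^{p-1} F_ξ(∇u)) = F(∇u)^p` in `Ω`. -/
def IsWeakPSol {n : ℕ} (N : MinkowskiNorm n) (Ω : Set (En n)) (p : ℝ)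
    (u : En n → ℝ) : Prop :=
  ∀ ψ : En n → ℝ, IsTestFun Ω ψ →
    (∫ x in Ω, N.F (gradient u x) ^ (p - 1) *
      ⟪gradient N.F (gradient u x), gradient ψ x⟫) =
      - ∫ x in Ω, N.F (gradient u x) ^ p * ψ x

/-- The polar (dual) norm `F^o(x) = sup_{ξ ≠ 0} ⟨ξ, x⟩ / F(ξ)`. -/
def polarF {n : ℕ} (N : MinkowskiNorm n) (x : En n) : ℝ :=
  sSup {c : ℝ | ∃ ξ : En n, ξ ≠ 0 ∧ c = ⟪ξ, x⟫ / N.F ξ}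

/-- The Wulff shape of radius `r` centered at `x₀`: `{x : F^o(x - x₀) < r}`. -/
def Wulff {n : ℕ} (N : MinkowskiNorm n) (r : ℝ) (x₀ : En n) : Set (En n) :=
  {x | polarF N (x - x₀) < r}

/-- `Ω` is an open set with smooth boundary: it is a smooth sublevel set of a smooth
function with nonvanishing gradient on the boundary. -/
def HasSmoothBoundary {n : ℕ} (Ω : Set (En n)) : Prop :=
  ∃ f : En n → ℝ, ContDiff ℝ (⊤ : ℕ∞) f ∧ Ω = {x | f x < 0} ∧
    ∀ x ∈ frontier Ω, fderiv ℝ f x ≠ 0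

/-- `C¹` on `s` with locally Hölder continuous gradient (i.e. `C^{1,α}_loc`). -/
def C1LocHolderOn {n : ℕ} (v : En n → ℝ) (s : Set (En n)) : Prop :=
  ContDiffOn ℝ 1 v s ∧
  ∀ x ∈ s, ∃ (α C : ℝ≥0), 0 < α ∧ (α : ℝ) ≤ 1 ∧
    ∃ t ∈ nhdsWithin x s, HolderOnWith C α (fun y => gradient v y) t

/-- Divergence of a vector field on `ℝⁿ`. -/
def divg {n : ℕ} (V : En n → En n) (x : En n) : ℝ :=
  ∑ i : Fin n, fderiv ℝ V x (EuclideanSpace.single i 1) i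

/-! ### Gradients -/

section Gradients

variable {n : ℕ}

/-- The Riesz isomorphism from the dual of `ℝⁿ` to `ℝⁿ` as a continuous linear map. -/
def rieszSharp (n : ℕ) : StrongDual ℝ (En n) →L[ℝ] En n :=
  LinearMap.toContinuousLinearMap
    { toFun := fun l => (InnerProductSpace.toDual ℝ (En n)).symm l
      map_add' := fun a b => map_add _ a b
      map_smul' := fun c a => by simp }

theorem gradient_eq_rieszSharp (f : En n → ℝ) (x : En n) :
    gradient f x = rieszSharp n (fderiv ℝ f x) := rfl

theorem inner_gradient (f : En n → ℝ) (x w : En n) :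
    ⟪gradient f x, w⟫ = fderiv ℝ f x w := inner_gradient_left

theorem norm_gradient (f : En n → ℝ) (x : En n) : ‖gradient f x‖ = ‖fderiv ℝ f x‖ :=
  (InnerProductSpace.toDual ℝ (En n)).symm.norm_map _

theorem ContDiffAt.gradient_right {f : En n → ℝ} {x : En n} {k m : WithTop ℕ∞}
    (hf : ContDiffAt ℝ k f x) (hm : m + 1 ≤ k) : ContDiffAt ℝ m (gradient f) x :=
  (rieszSharp n).contDiff.contDiffAt.comp x (hf.fderiv_right hm)

theorem ContDiffOn.continuousOn_gradient {f : En n → ℝ} {U : Set (En n)}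
    (hf : ContDiffOn ℝ 1 f U) (hU : IsOpen U) : ContinuousOn (gradient f) U := fun x hx =>
  (((hf.contDiffAt (hU.mem_nhds hx)).gradient_right (m := 0) (by simp)).continuousAt
    ).continuousWithinAt

theorem gradient_eq_of_forall_inner {f : En n → ℝ} {x g : En n}
    (h : ∀ w, fderiv ℝ f x w = ⟪g, w⟫) : gradient f x = g :=
  ext_inner_right ℝ fun w => by rw [inner_gradient, h]

theorem gradient_comp_smul (f : En n → ℝ) (c : ℝ) (x : En n) :
    gradient (fun y => f (c • y)) x = c • gradient f (c • x) := by
  rw [gradient_eq_rieszSharp, fderiv_comp_smul, map_smul, gradient_eq_rieszSharp]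

theorem gradient_const_mul' (f : En n → ℝ) (c : ℝ) (x : En n) :
    gradient (fun y => c * f y) x = c • gradient f x := by
  rw [gradient_eq_rieszSharp, gradient_eq_rieszSharp, ← map_smul]
  congr 1
  exact congrFun (fderiv_const_smul_field (f := f) c) x

theorem gradient_comp_add_right' (f : En n → ℝ) (h x : En n) :
    gradient (fun y => f (y + h)) x = gradient f (x + h) := by
  rw [gradient_eq_rieszSharp, gradient_eq_rieszSharp, fderiv_comp_add_right]

theorem gradient_sub' {f g : En n → ℝ} {x : En n} (hf : DifferentiableAt ℝ f x)
    (hg : DifferentiableAt ℝ g x) :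
    gradient (fun y => f y - g y) x = gradient f x - gradient g x := by
  simp only [gradient_eq_rieszSharp]
  rw [fderiv_fun_sub hf hg, map_sub]

end Gradients

theorem one_add_one_le_smooth : (1 : WithTop ℕ∞) + 1 ≤ ((⊤ : ℕ∞) : WithTop ℕ∞) := by
  rw [one_add_one_eq_two]
  exact WithTop.coe_le_coe.2 (le_top : (2 : ℕ∞) ≤ ⊤)

/-! ### The flux `F^{p-1} F_ξ` of a Minkowski norm -/

namespace MinkowskiNorm

variable {n : ℕ} (N : MinkowskiNorm n)

theorem map_zero : N.F 0 = 0 := by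
  simpa using N.homog 0 le_rfl 0

theorem nonneg (ξ : En n) : 0 ≤ N.F ξ := by
  rcases eq_or_ne ξ 0 with rfl | h
  · exact N.map_zero.ge
  · exact (N.pos ξ h).le

theorem continuous : Continuous N.F := N.convexOn.locallyLipschitz.continuous

theorem contDiffAt {ξ : En n} (h : ξ ≠ 0) : ContDiffAt ℝ (⊤ : ℕ∞) N.F ξ :=
  N.smooth.contDiffAt (isOpen_compl_singleton.mem_nhds h)

theorem differentiableAt {ξ : En n} (h : ξ ≠ 0) : DifferentiableAt ℝ N.F ξ :=
  (N.contDiffAt h).differentiableAt (by simp)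

theorem exists_norm_equiv : ∃ c C : ℝ, 0 < c ∧ 0 < C ∧ ∀ ξ, c * ‖ξ‖ ≤ N.F ξ ∧ N.F ξ ≤ C * ‖ξ‖ := by
  rcases (sphere (0 : En n) 1).eq_empty_or_nonempty with he | hne
  · refine ⟨1, 1, one_pos, one_pos, fun ξ => ?_⟩
    have : ξ = 0 := by
      by_contra h
      have : ‖ξ‖⁻¹ • ξ ∈ sphere (0 : En n) 1 := by
        simp [norm_smul, h]
      simp [he] at this
    simp [this, N.map_zero]
  · obtain ⟨a, ha, hamin⟩ := (isCompact_sphere (0 : En n) 1).exists_isMinOn hne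
      N.continuous.continuousOn
    obtain ⟨b, hb, hbmax⟩ := (isCompact_sphere (0 : En n) 1).exists_isMaxOn hne
      N.continuous.continuousOn
    have hne0 : ∀ a ∈ sphere (0 : En n) 1, a ≠ 0 := fun a ha h => by simp [h] at ha
    refine ⟨N.F a, N.F b, N.pos a (hne0 a ha), N.pos b (hne0 b hb), fun ξ => ?_⟩
    rcases eq_or_ne ξ 0 with rfl | h
    · simp [N.map_zero]
    · have hs : ‖ξ‖⁻¹ • ξ ∈ sphere (0 : En n) 1 := by simp [norm_smul, h]
      have e : N.F ξ = ‖ξ‖ * N.F (‖ξ‖⁻¹ • ξ) := by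
        rw [← N.homog _ (norm_nonneg ξ), smul_smul, mul_inv_cancel₀ (norm_ne_zero_iff.2 h),
          one_smul]
      have h1 := hamin hs
      have h2 := hbmax hs
      simp only [mem_ofPred_eq] at h1 h2
      rw [e]
      constructor <;> nlinarith [norm_nonneg ξ]

theorem gradient_smul {c : ℝ} (hc : 0 < c) (ξ : En n) :
    gradient N.F (c • ξ) = gradient N.F ξ := by
  have h1 := gradient_comp_smul N.F c ξ
  have h2 : (fun y => N.F (c • y)) = fun y => c * N.F y := by
    funext y; exact N.homog c hc.le y
  rw [h2, gradient_const_mul'] at h1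
  exact (smul_right_injective _ hc.ne' h1).symm

theorem gradient_neg (ξ : En n) : gradient N.F (-ξ) = -gradient N.F ξ := by
  have h1 := gradient_comp_smul N.F (-1) ξ
  have h2 : (fun y => N.F ((-1 : ℝ) • y)) = N.F := by
    funext y; rw [neg_one_smul, N.even]
  rw [h2] at h1
  rw [h1]; simp

theorem inner_gradient_self {ξ : En n} (h : ξ ≠ 0) : ⟪gradient N.F ξ, ξ⟫ = N.F ξ := by
  rw [inner_gradient]
  have h1 : HasDerivAt (fun t : ℝ => N.F (t • ξ)) (fderiv ℝ N.F ξ ξ) 1 := by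
    have h2 : HasFDerivAt N.F (fderiv ℝ N.F ξ) ((1 : ℝ) • ξ) := by
      rw [one_smul]; exact (N.differentiableAt h).hasFDerivAt
    simpa [Function.comp_def] using
      h2.comp_hasDerivAt (1 : ℝ) ((hasDerivAt_id (1 : ℝ)).smul_const ξ)
  have h2 : HasDerivAt (fun t : ℝ => N.F (t • ξ)) (N.F ξ) 1 := by
    have : HasDerivAt (fun t : ℝ => t * N.F ξ) (N.F ξ) 1 := by
      simpa using (hasDerivAt_id (1 : ℝ)).mul_const (N.F ξ)
    refine this.congr_of_eventuallyEq ?_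
    filter_upwards [lt_mem_nhds (zero_lt_one' ℝ)] with t ht
    exact N.homog t ht.le ξ
  exact h1.unique h2

/-- The flux `F^{p-1} F_ξ`. -/
def flux (p : ℝ) (ξ : En n) : En n := N.F ξ ^ (p - 1) • gradient N.F ξ

/-- The duality map `F F_ξ`, which is the gradient of `F² / 2`. -/
def dualMap (ξ : En n) : En n := N.F ξ • gradient N.F ξ

theorem flux_zero {p : ℝ} (hp : 1 < p) : N.flux p 0 = 0 := by
  simp [flux, N.map_zero, Real.zero_rpow (sub_pos.2 hp).ne']

theorem flux_eq {ξ : En n} (p : ℝ) (h : ξ ≠ 0) :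
    N.flux p ξ = N.F ξ ^ (p - 2) • N.dualMap ξ := by
  rw [flux, dualMap, smul_smul]
  congr 1
  rw [← Real.rpow_add_one (N.pos ξ h).ne']
  congr 1; ring

theorem inner_flux_self {p : ℝ} (hp : 1 < p) (ξ : En n) : ⟪N.flux p ξ, ξ⟫ = N.F ξ ^ p := by
  rcases eq_or_ne ξ 0 with rfl | h
  · rw [inner_zero_right, N.map_zero, Real.zero_rpow (by linarith)]
  · rw [flux, real_inner_smul_left, N.inner_gradient_self h,
      ← Real.rpow_add_one (N.pos ξ h).ne']
    congr 1; ring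

theorem flux_smul {p c : ℝ} (hc : 0 < c) (ξ : En n) :
    N.flux p (c • ξ) = c ^ (p - 1) • N.flux p ξ := by
  rw [flux, flux, N.gradient_smul hc, N.homog c hc.le, Real.mul_rpow hc.le (N.nonneg ξ), smul_smul]

theorem flux_neg {p : ℝ} (ξ : En n) : N.flux p (-ξ) = -N.flux p ξ := by
  rw [flux, flux, N.gradient_neg, N.even, smul_neg]

theorem contDiffAt_dualMap {ξ : En n} (h : ξ ≠ 0) : ContDiffAt ℝ 1 N.dualMap ξ :=
  ((N.contDiffAt h).of_le (by exact_mod_cast le_top)).smul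
    ((N.contDiffAt h).gradient_right one_add_one_le_smooth)

theorem contDiffAt_flux {ξ : En n} (p : ℝ) (h : ξ ≠ 0) : ContDiffAt ℝ 1 (N.flux p) ξ :=
  (((N.contDiffAt h).of_le (by exact_mod_cast le_top)).rpow_const_of_ne (N.pos ξ h).ne').smul
    ((N.contDiffAt h).gradient_right one_add_one_le_smooth)

theorem continuous_flux {p : ℝ} (hp : 1 < p) : Continuous (N.flux p) := by
  rw [continuous_iff_continuousAt]
  intro ξ
  rcases eq_or_ne ξ 0 with rfl | h
  · obtain ⟨K, t, ht, hK⟩ := N.convexOn.locallyLipschitz 0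
    have h1 : ∀ᶠ ξ in 𝓝 (0 : En n), ‖N.flux p ξ‖ ≤ N.F ξ ^ (p - 1) * K := by
      filter_upwards [eventually_mem_nhds_iff.2 ht] with ξ hξ
      rw [flux, norm_smul, norm_gradient, Real.norm_of_nonneg (Real.rpow_nonneg (N.nonneg _) _)]
      exact mul_le_mul_of_nonneg_left (norm_fderiv_le_of_lipschitzOn ℝ hξ hK)
        (Real.rpow_nonneg (N.nonneg _) _)
    have h2 : Tendsto (fun ξ => N.F ξ ^ (p - 1) * K) (𝓝 0) (𝓝 0) := by
      have : Continuous fun ξ => N.F ξ ^ (p - 1) * K :=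
        (N.continuous.rpow_const fun _ => Or.inr (by linarith)).mul_const _
      simpa [N.map_zero, Real.zero_rpow (sub_pos.2 hp).ne'] using this.tendsto 0
    rw [ContinuousAt, N.flux_zero hp]
    exact squeeze_zero_norm' h1 h2
  · exact (N.contDiffAt_flux p h).continuousAt

theorem gradient_sq_half {ξ : En n} (h : ξ ≠ 0) :
    gradient (fun y => N.F y ^ 2 / 2) ξ = N.dualMap ξ := by
  apply gradient_eq_of_forall_inner
  intro w
  have := ((N.differentiableAt h).hasFDerivAt.pow 2).mul_const (2⁻¹ : ℝ)
  have e : (fun y => N.F y ^ 2 / 2) = fun y => N.F y ^ 2 * 2⁻¹ := by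
    funext y; rw [div_eq_mul_inv]
  rw [e, this.fderiv, dualMap, real_inner_smul_left, inner_gradient]
  simp
  ring

theorem inner_fderiv_dualMap {ξ : En n} (h : ξ ≠ 0) (w u : En n) :
    ⟪fderiv ℝ N.dualMap ξ w, u⟫ =
      fderiv ℝ (fun x => fderiv ℝ (fun y => N.F y ^ 2 / 2) x) ξ w u := by
  have h1 : N.dualMap =ᶠ[𝓝 ξ] fun x => rieszSharp n (fderiv ℝ (fun y => N.F y ^ 2 / 2) x) := by
    filter_upwards [isOpen_compl_singleton.mem_nhds h] with x hx
    exact (N.gradient_sq_half hx).symm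
  have h2 : DifferentiableAt ℝ (fun x => fderiv ℝ (fun y => N.F y ^ 2 / 2) x) ξ :=
    ((((N.contDiffAt h).pow 2).div_const 2).fderiv_right (m := 1)
      one_add_one_le_smooth).differentiableAt (by simp)
  have h3 : fderiv ℝ (fun x => rieszSharp n (fderiv ℝ (fun y => N.F y ^ 2 / 2) x)) ξ = _ :=
    ((rieszSharp n).hasFDerivAt.comp ξ h2.hasFDerivAt).fderiv
  rw [h1.fderiv_eq, h3]
  exact InnerProductSpace.toDual_symm_apply

theorem inner_fderiv_dualMap_symm {ξ : En n} (h : ξ ≠ 0) (w u : En n) :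
    ⟪fderiv ℝ N.dualMap ξ w, u⟫ = ⟪fderiv ℝ N.dualMap ξ u, w⟫ := by
  rw [N.inner_fderiv_dualMap h, N.inner_fderiv_dualMap h]
  exact (((N.contDiffAt h).pow 2).div_const 2).isSymmSndFDerivAt
    (by rw [minSmoothness_of_isRCLikeNormedField, ← one_add_one_eq_two]; exact one_add_one_le_smooth) w u

theorem inner_fderiv_dualMap_pos {ξ : En n} (h : ξ ≠ 0) {w : En n} (hw : w ≠ 0) :
    0 < ⟪fderiv ℝ N.dualMap ξ w, w⟫ := by
  rw [N.inner_fderiv_dualMap h]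
  exact N.elliptic ξ h w hw

theorem fderiv_dualMap_self {ξ : En n} (h : ξ ≠ 0) : fderiv ℝ N.dualMap ξ ξ = N.dualMap ξ := by
  have h1 : HasDerivAt (fun t : ℝ => N.dualMap (t • ξ)) (fderiv ℝ N.dualMap ξ ξ) 1 := by
    have h2 : HasFDerivAt N.dualMap (fderiv ℝ N.dualMap ξ) ((1 : ℝ) • ξ) := by
      rw [one_smul]; exact ((N.contDiffAt_dualMap h).differentiableAt (by simp)).hasFDerivAt
    simpa [Function.comp_def] using
      h2.comp_hasDerivAt (1 : ℝ) ((hasDerivAt_id (1 : ℝ)).smul_const ξ)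
  have h2 : HasDerivAt (fun t : ℝ => N.dualMap (t • ξ)) (N.dualMap ξ) 1 := by
    have : HasDerivAt (fun t : ℝ => t • N.dualMap ξ) (N.dualMap ξ) 1 := by
      simpa using (hasDerivAt_id (1 : ℝ)).smul_const (N.dualMap ξ)
    refine this.congr_of_eventuallyEq ?_
    filter_upwards [lt_mem_nhds (zero_lt_one' ℝ)] with t ht
    rw [dualMap, N.gradient_smul ht, N.homog t ht.le, dualMap, smul_smul]
  exact h1.unique h2

theorem sq_inner_gradient_le {ξ : En n} (h : ξ ≠ 0) (w : En n) :
    ⟪gradient N.F ξ, w⟫ ^ 2 ≤ ⟪fderiv ℝ N.dualMap ξ w, w⟫ := by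
  have hF := N.pos ξ h
  set d := ⟪gradient N.F ξ, w⟫ with hd
  have h0 : 0 ≤ ⟪fderiv ℝ N.dualMap ξ (w - (d / N.F ξ) • ξ), w - (d / N.F ξ) • ξ⟫ := by
    rcases eq_or_ne (w - (d / N.F ξ) • ξ) 0 with h1 | h1
    · simp [h1]
    · exact (N.inner_fderiv_dualMap_pos h h1).le
  have h1 : ⟪N.dualMap ξ, w⟫ = N.F ξ * d := by rw [dualMap, real_inner_smul_left]
  have h2 : ⟪N.dualMap ξ, ξ⟫ = N.F ξ * N.F ξ := by
    rw [dualMap, real_inner_smul_left, N.inner_gradient_self h]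
  have h3 : ⟪fderiv ℝ N.dualMap ξ w, ξ⟫ = N.F ξ * d := by
    rw [N.inner_fderiv_dualMap_symm h, N.fderiv_dualMap_self h, h1]
  rw [map_sub, map_smul, N.fderiv_dualMap_self h, inner_sub_left, inner_sub_right,
    inner_sub_right, real_inner_smul_left, real_inner_smul_left, real_inner_smul_right,
    real_inner_smul_right, h1, h2, h3] at h0
  have e : d / N.F ξ * (N.F ξ * d) = d ^ 2 := by field_simp
  have e2 : d / N.F ξ * (d / N.F ξ * (N.F ξ * N.F ξ)) = d ^ 2 := by field_simp
  rw [e, e2] at h0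
  linarith

theorem inner_fderiv_flux_pos {p : ℝ} (hp : 1 < p) {ξ : En n} (h : ξ ≠ 0) {w : En n}
    (hw : w ≠ 0) : 0 < ⟪fderiv ℝ (N.flux p) ξ w, w⟫ := by
  have hF := N.pos ξ h
  have h1 : N.flux p =ᶠ[𝓝 ξ] fun x => N.F x ^ (p - 2) • N.dualMap x := by
    filter_upwards [isOpen_compl_singleton.mem_nhds h] with x hx
    exact N.flux_eq p hx
  have h2 := ((N.differentiableAt h).hasFDerivAt.rpow_const (p := p - 2) (Or.inl hF.ne')).smul
    ((N.contDiffAt_dualMap h).differentiableAt (by simp)).hasFDerivAt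
  have h2' : fderiv ℝ (fun x => N.F x ^ (p - 2) • N.dualMap x) ξ = _ := h2.fderiv
  rw [h1.fderiv_eq, h2']
  have hB := N.inner_fderiv_dualMap_pos h hw
  have hC := N.sq_inner_gradient_le h w
  have hP : 0 < N.F ξ ^ (p - 2) := Real.rpow_pos_of_pos hF _
  set d := ⟪gradient N.F ξ, w⟫ with hd
  have e : N.F ξ ^ (p - 2 - 1) * N.F ξ = N.F ξ ^ (p - 2) := by
    rw [← Real.rpow_add_one hF.ne']; congr 1; ring
  have h3 : ⟪N.dualMap ξ, w⟫ = N.F ξ * d := by rw [dualMap, real_inner_smul_left]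
  rw [_root_.add_apply, inner_add_left, _root_.smul_apply, real_inner_smul_left,
    ContinuousLinearMap.smulRight_apply, real_inner_smul_left, h3, _root_.smul_apply,
    ← inner_gradient, ← hd, smul_eq_mul]
  have key : N.F ξ ^ (p - 2) * ⟪fderiv ℝ N.dualMap ξ w, w⟫ +
      (p - 2) * N.F ξ ^ (p - 2 - 1) * d * (N.F ξ * d) =
      N.F ξ ^ (p - 2) * (⟪fderiv ℝ N.dualMap ξ w, w⟫ + (p - 2) * d ^ 2) := by
    rw [mul_add, ← e]; ring
  rw [key]
  apply mul_pos hP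
  rcases eq_or_ne d 0 with h0 | h0
  · rw [h0]; simpa using hB
  · have : 0 < d ^ 2 := by positivity
    nlinarith

/-- Ellipticity and boundedness of the linearised flux on annuli. -/
theorem exists_ellipticity {p : ℝ} (hp : 1 < p) {r R : ℝ} (hr : 0 < r) :
    ∃ c C : ℝ, 0 < c ∧ 0 < C ∧ ∀ ξ : En n, r ≤ ‖ξ‖ → ‖ξ‖ ≤ R →
      ‖fderiv ℝ (N.flux p) ξ‖ ≤ C ∧ ∀ w, c * ‖w‖ ^ 2 ≤ ⟪fderiv ℝ (N.flux p) ξ w, w⟫ := by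
  set A : Set (En n) := {ξ | r ≤ ‖ξ‖ ∧ ‖ξ‖ ≤ R} with hA
  have hAc : IsCompact A := by
    refine (isCompact_closedBall (0 : En n) R).of_isClosed_subset ?_ ?_
    · exact (isClosed_le continuous_const continuous_norm).inter
        (isClosed_le continuous_norm continuous_const)
    · intro x hx; simpa using hx.2
  have hne : ∀ ξ ∈ A, ξ ≠ 0 := fun ξ hξ h0 => by
    have := hξ.1; rw [h0, norm_zero] at this; linarith
  have hcont : ContinuousOn (fderiv ℝ (N.flux p)) A := fun ξ hξ =>
    ((N.contDiffAt_flux p (hne ξ hξ)).fderiv_right (m := 0) (by simp)).continuousAt.continuousWithinAt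
  obtain ⟨C, hC⟩ := hAc.exists_bound_of_continuousOn hcont
  have hS := hAc.prod (isCompact_sphere (0 : En n) 1)
  have hcont2 : ContinuousOn (fun q : En n × En n => ⟪fderiv ℝ (N.flux p) q.1 q.2, q.2⟫)
      (A ×ˢ sphere (0 : En n) 1) := by
    apply ContinuousOn.inner
    · exact (hcont.comp continuousOn_fst fun q hq => hq.1).clm_apply continuousOn_snd
    · exact continuousOn_snd
  have hpos : ∃ c : ℝ, 0 < c ∧ ∀ q ∈ A ×ˢ sphere (0 : En n) 1,
      c ≤ ⟪fderiv ℝ (N.flux p) q.1 q.2, q.2⟫ := by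
    rcases (A ×ˢ sphere (0 : En n) 1).eq_empty_or_nonempty with he | hn
    · exact ⟨1, one_pos, fun q hq => by simp [he] at hq⟩
    · obtain ⟨q, hq, hmin⟩ := hS.exists_isMinOn hn hcont2
      refine ⟨_, N.inner_fderiv_flux_pos hp (hne _ hq.1) ?_, fun q' hq' => hmin hq'⟩
      intro h0
      have := hq.2
      simp [h0] at this
  obtain ⟨c, hc, hcle⟩ := hpos
  refine ⟨c, max C 1, hc, by positivity, fun ξ h1 h2 => ⟨(hC ξ ⟨h1, h2⟩).trans (le_max_left _ _),
    fun w => ?_⟩⟩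
  rcases eq_or_ne w 0 with rfl | hw
  · simp
  · have := hcle (ξ, ‖w‖⁻¹ • w) ⟨⟨h1, h2⟩, by simp [norm_smul, hw]⟩
    have hw' : 0 < ‖w‖ := norm_pos_iff.2 hw
    simp only [map_smul, real_inner_smul_left, real_inner_smul_right] at this
    rw [← mul_assoc, ← mul_inv, inv_mul_eq_div, le_div_iff₀ (by positivity)] at this
    rw [sq]; exact this

theorem exists_inner_flux_sub_eq (p : ℝ) {ξ η : En n}
    (h : ∀ t ∈ Icc (0 : ℝ) 1, η + t • (ξ - η) ≠ 0) :
    ∃ t ∈ Icc (0 : ℝ) 1, ⟪N.flux p ξ - N.flux p η, ξ - η⟫ =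
      ⟪fderiv ℝ (N.flux p) (η + t • (ξ - η)) (ξ - η), ξ - η⟫ := by
  have hd : ∀ t ∈ Icc (0 : ℝ) 1, HasDerivAt (fun t : ℝ => ⟪N.flux p (η + t • (ξ - η)), ξ - η⟫)
      ⟪fderiv ℝ (N.flux p) (η + t • (ξ - η)) (ξ - η), ξ - η⟫ t := by
    intro t ht
    have h1 : HasDerivAt (fun t : ℝ => η + t • (ξ - η)) (ξ - η) t := by
      simpa using ((hasDerivAt_id t).smul_const (ξ - η)).const_add η
    have h2 := ((N.contDiffAt_flux p (h t ht)).differentiableAt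
      (by simp)).hasFDerivAt.comp_hasDerivAt t h1
    simpa [Function.comp_def] using h2.inner ℝ (hasDerivAt_const t (ξ - η))
  obtain ⟨t, ht, he⟩ := exists_hasDerivAt_eq_slope _ _ (zero_lt_one' ℝ)
    (fun t ht => (hd t ht).continuousAt.continuousWithinAt)
    (fun t ht => hd t (Ioo_subset_Icc_self ht))
  refine ⟨t, Ioo_subset_Icc_self ht, ?_⟩
  rw [he]
  simp [inner_sub_left]

theorem inner_flux_sub_pos {p : ℝ} (hp : 1 < p) {ξ η : En n} (hne : ξ ≠ η) :
    0 < ⟪N.flux p ξ - N.flux p η, ξ - η⟫ := by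
  by_cases h : ∀ t ∈ Icc (0 : ℝ) 1, η + t • (ξ - η) ≠ 0
  · obtain ⟨t, ht, he⟩ := N.exists_inner_flux_sub_eq p h
    rw [he]
    exact N.inner_fderiv_flux_pos hp (h t ht) (sub_ne_zero.2 hne)
  · push Not at h
    obtain ⟨t, ⟨ht0, ht1⟩, ht⟩ := h
    rcases eq_or_ne η 0 with rfl | hη
    · rw [N.flux_zero hp, sub_zero, sub_zero, N.inner_flux_self hp]
      exact Real.rpow_pos_of_pos (N.pos _ hne) _
    have ht0' : 0 < t := lt_of_le_of_ne ht0 fun h0 => by rw [← h0] at ht; simp at ht; exact hη ht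
    have hξ : ξ = -(((1 - t) / t) • η) := by
      have h1 : t • ξ = -((1 - t) • η) := by
        rw [← sub_eq_zero, ← ht]; module
      have h2 : ξ = t⁻¹ • (t • ξ) := by rw [smul_smul, inv_mul_cancel₀ ht0'.ne', one_smul]
      rw [h2, h1, smul_neg, smul_smul, div_eq_inv_mul]
    have hc0 : 0 ≤ (1 - t) / t := div_nonneg (by linarith) ht0
    have hF : 0 < N.F η ^ p := Real.rpow_pos_of_pos (N.pos _ hη) _
    rcases hc0.eq_or_lt with hc | hc
    · rw [← hc] at hξ
      have hξ0 : ξ = 0 := by simpa using hξ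
      rw [hξ0, N.flux_zero hp, zero_sub, zero_sub, inner_neg_neg, N.inner_flux_self hp]
      exact hF
    · rw [hξ, N.flux_neg, N.flux_smul hc]
      set c := (1 - t) / t
      have : ⟪-(c ^ (p - 1) • N.flux p η) - N.flux p η, -(c • η) - η⟫ =
          (c ^ (p - 1) + 1) * (c + 1) * N.F η ^ p := by
        rw [← N.inner_flux_self hp η]
        simp only [inner_sub_left, inner_sub_right, inner_neg_left, inner_neg_right,
          real_inner_smul_left, real_inner_smul_right]
        ring
      rw [this]
      positivity

theorem inner_flux_sub_nonneg {p : ℝ} (hp : 1 < p) (ξ η : En n) :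
    0 ≤ ⟪N.flux p ξ - N.flux p η, ξ - η⟫ := by
  rcases eq_or_ne ξ η with rfl | h
  · simp
  · exact (N.inner_flux_sub_pos hp h).le

/-- Uniform monotonicity and Lipschitz continuity of the flux away from the origin. -/
theorem exists_flux_bounds {p : ℝ} (hp : 1 < p) {r R : ℝ} (hr : 0 < r) :
    ∃ c C : ℝ, 0 < c ∧ 0 < C ∧ ∀ e ξ η : En n, ‖e‖ ≤ 1 → r ≤ ⟪ξ, e⟫ → r ≤ ⟪η, e⟫ →
      ‖ξ‖ ≤ R → ‖η‖ ≤ R →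
      c * ‖ξ - η‖ ^ 2 ≤ ⟪N.flux p ξ - N.flux p η, ξ - η⟫ ∧
        ‖N.flux p ξ - N.flux p η‖ ≤ C * ‖ξ - η‖ := by
  obtain ⟨c, C, hc, hC, H⟩ := N.exists_ellipticity hp (R := R) hr
  refine ⟨c, C, hc, hC, fun e ξ η he h1 h2 h3 h4 => ?_⟩
  set D : Set (En n) := {ζ | r ≤ ⟪ζ, e⟫} ∩ closedBall 0 R with hD
  have hDc : Convex ℝ D := by
    refine Convex.inter ?_ (convex_closedBall _ _)
    intro x hx y hy a b ha hb hab
    simp only [mem_ofPred_eq] at hx hy ⊢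
    rw [inner_add_left, real_inner_smul_left, real_inner_smul_left]
    calc r = a * r + b * r := by rw [← add_mul, hab, one_mul]
      _ ≤ _ := by gcongr
  have hDr : ∀ ζ ∈ D, r ≤ ‖ζ‖ := fun ζ hζ => by
    have h : r ≤ ⟪ζ, e⟫ := hζ.1
    have h' := real_inner_le_norm ζ e
    nlinarith [norm_nonneg ζ, norm_nonneg e]
  have hDR : ∀ ζ ∈ D, ‖ζ‖ ≤ R := fun ζ hζ => by simpa using hζ.2
  have hD0 : ∀ ζ ∈ D, ζ ≠ 0 := fun ζ hζ h0 => by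
    have := hDr ζ hζ; rw [h0, norm_zero] at this; linarith
  have hξ : ξ ∈ D := ⟨h1, by simpa using h3⟩
  have hη : η ∈ D := ⟨h2, by simpa using h4⟩
  have hseg : ∀ t ∈ Icc (0 : ℝ) 1, η + t • (ξ - η) ∈ D := fun t ht =>
    hDc.add_smul_sub_mem hη hξ ht
  constructor
  · obtain ⟨t, ht, he⟩ := N.exists_inner_flux_sub_eq p fun t ht => hD0 _ (hseg t ht)
    rw [he]
    exact (H _ (hDr _ (hseg t ht)) (hDR _ (hseg t ht))).2 _
  · exact hDc.norm_image_sub_le_of_norm_fderiv_le (𝕜 := ℝ)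
      (fun ζ hζ => (N.contDiffAt_flux p (hD0 ζ hζ)).differentiableAt (by simp))
      (fun ζ hζ => (H ζ (hDr ζ hζ) (hDR ζ hζ)).1) hη hξ

end MinkowskiNorm

/-! ### Testing with `C¹` functions -/

section Testing

variable {n : ℕ}

theorem gradient_eq_zero_of_notMem_tsupport {ψ : En n → ℝ} {x : En n} (hx : x ∉ tsupport ψ) :
    gradient ψ x = 0 := by
  have : fderiv ℝ ψ x = 0 := by
    by_contra h
    exact hx (support_fderiv_subset ℝ h)
  rw [gradient_eq_rieszSharp, this, _root_.map_zero]

theorem ContDiff.continuous_gradient {ψ : En n → ℝ} (h : ContDiff ℝ 1 ψ) :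
    Continuous (gradient ψ) :=
  (rieszSharp n).continuous.comp (h.continuous_fderiv (by simp))

theorem norm_gradient_sub {f g : En n → ℝ} (x y : En n) :
    ‖gradient f x - gradient g y‖ = ‖fderiv ℝ f x - fderiv ℝ g y‖ := by
  rw [gradient_eq_rieszSharp, gradient_eq_rieszSharp, ← map_sub]
  exact (InnerProductSpace.toDual ℝ (En n)).symm.norm_map _

/-- Smooth approximation of compactly supported `C¹` functions in the `C¹` norm. -/
theorem exists_smooth_approx {ψ : En n → ℝ} (hψ : ContDiff ℝ 1 ψ) (hc : HasCompactSupport ψ)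
    {ε δ : ℝ} (hε : 0 < ε) (hδ : 0 < δ) :
    ∃ φ : En n → ℝ, ContDiff ℝ (⊤ : ℕ∞) φ ∧ tsupport φ ⊆ cthickening δ (tsupport ψ) ∧
      ∀ x, ‖gradient ψ x - gradient φ x‖ ≤ ε := by
  have hcd : HasCompactSupport (fderiv ℝ ψ) := hc.fderiv ℝ
  have hcont : Continuous (fderiv ℝ ψ) := hψ.continuous_fderiv (by simp)
  obtain ⟨d, hd, hunif⟩ := Metric.uniformContinuous_iff.1
    (hcont.uniformContinuous_of_tendsto_cocompact hcd.is_zero_at_infty) ε hε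
  have hr : 0 < min d δ := lt_min hd hδ
  let b : ContDiffBump (0 : En n) := ⟨min d δ / 2, min d δ, by linarith, by linarith⟩
  refine ⟨convolution (b.normed volume) ψ (ContinuousLinearMap.lsmul ℝ ℝ) volume, ?_, ?_, ?_⟩
  · exact b.hasCompactSupport_normed.contDiff_convolution_left _ b.contDiff_normed
      hψ.continuous.locallyIntegrable
  · refine closure_minimal ?_ isClosed_cthickening
    refine (support_convolution_subset _).trans ?_
    rintro _ ⟨x, hx, y, hy, rfl⟩
    rw [b.support_normed_eq] at hx
    refine mem_cthickening_of_dist_le _ y δ _ (subset_tsupport _ hy) ?_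
    simp only [dist_eq_norm, add_sub_cancel_right]
    have : ‖x‖ < b.rOut := by simpa using hx
    exact this.le.trans (min_le_right d δ)
  · intro x
    rw [norm_gradient_sub, (hc.hasFDerivAt_convolution_right _
      b.continuous_normed.locallyIntegrable hψ x).fderiv]
    have e : (ContinuousLinearMap.precompR (En n) (ContinuousLinearMap.lsmul ℝ ℝ) :
        ℝ →L[ℝ] (En n →L[ℝ] ℝ) →L[ℝ] (En n →L[ℝ] ℝ)) = ContinuousLinearMap.lsmul ℝ ℝ := by
      ext; simp
    rw [e, ← dist_eq_norm, dist_comm]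
    refine b.dist_normed_convolution_le hcont.aestronglyMeasurable fun y hy => ?_
    exact (hunif (lt_of_lt_of_le hy (min_le_left _ _))).le

/-- `u` is a `C¹` weak solution of the Finsler `p`-Laplace equation in `U`, tested with `C¹`
functions. -/
def IsPHarmonicOn (N : MinkowskiNorm n) (p : ℝ) (U : Set (En n)) (u : En n → ℝ) : Prop :=
  ContDiffOn ℝ 1 u U ∧ ∀ ψ : En n → ℝ, ContDiff ℝ 1 ψ → HasCompactSupport ψ → tsupport ψ ⊆ U →
    ∫ x, ⟪N.flux p (gradient u x), gradient ψ x⟫ = 0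

variable {N : MinkowskiNorm n} {p : ℝ} {U V : Set (En n)} {u : En n → ℝ}

theorem continuousOn_flux_gradient (hp : 1 < p) (hU : IsOpen U) (hu : ContDiffOn ℝ 1 u U) :
    ContinuousOn (fun x => N.flux p (gradient u x)) U :=
  (N.continuous_flux hp).comp_continuousOn (hu.continuousOn_gradient hU)

theorem IsWeakPHarmonic.isPHarmonicOn (hp : 1 < p) (hU : IsOpen U) (hu : ContDiffOn ℝ 1 u U)
    (h : IsWeakPHarmonic N U p u) : IsPHarmonicOn N p U u := by
  refine ⟨hu, fun ψ hψ hc hs => ?_⟩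
  obtain ⟨δ, hδ, hsub⟩ := hc.isCompact.exists_cthickening_subset_open hU hs
  set K := cthickening δ (tsupport ψ) with hK
  have hKc : IsCompact K := hc.isCompact.cthickening
  have hKm : MeasurableSet K := hKc.isClosed.measurableSet
  have hcont := continuousOn_flux_gradient (N := N) hp hU hu
  obtain ⟨C, hC⟩ := hKc.exists_bound_of_continuousOn (hcont.mono hsub)
  have hInt : ∀ φ : En n → ℝ, ContDiff ℝ 1 φ →
      IntegrableOn (fun x => ⟪N.flux p (gradient u x), gradient φ x⟫) K := fun φ hφ =>
    ((hcont.mono hsub).inner hφ.continuous_gradient.continuousOn).integrableOn_compact hKc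
  have hzero : ∀ φ : En n → ℝ, tsupport φ ⊆ K → ∀ x, x ∉ K →
      ⟪N.flux p (gradient u x), gradient φ x⟫ = 0 := fun φ hφ x hx => by
    rw [gradient_eq_zero_of_notMem_tsupport fun h => hx (hφ h), inner_zero_right]
  have hψK : tsupport ψ ⊆ K := self_subset_cthickening _
  rw [← setIntegral_eq_integral_of_forall_compl_eq_zero (hzero ψ hψK), ← abs_nonpos_iff]
  have hbound : ∀ ε : ℝ, 0 < ε →
      |∫ x in K, ⟪N.flux p (gradient u x), gradient ψ x⟫| ≤ C * volume.real K * ε := by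
    intro ε hε
    obtain ⟨φ, hφ, hφs, hφa⟩ := exists_smooth_approx hψ hc hε hδ
    have hφ1 : ContDiff ℝ 1 φ := hφ.of_le (by exact_mod_cast le_top)
    have hφ0 : ∫ x in K, ⟪N.flux p (gradient u x), gradient φ x⟫ = 0 := by
      rw [setIntegral_eq_integral_of_forall_compl_eq_zero (hzero φ hφs),
        ← setIntegral_eq_integral_of_forall_compl_eq_zero
          (s := U) fun x hx => hzero φ hφs x fun h => hx (hsub h)]
      have := h φ ⟨hφ, HasCompactSupport.of_support_subset_isCompact hKc
        ((subset_tsupport _).trans hφs), hφs.trans hsub⟩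
      simpa only [MinkowskiNorm.flux, real_inner_smul_left] using this
    have e : ∫ x in K, ⟪N.flux p (gradient u x), gradient ψ x⟫ =
        ∫ x in K, ⟪N.flux p (gradient u x), gradient ψ x - gradient φ x⟫ := by
      simp only [inner_sub_right]
      rw [integral_sub (hInt ψ hψ) (hInt φ hφ1), hφ0, sub_zero]
    rw [e, ← Real.norm_eq_abs]
    calc _ ≤ (C * ε) * volume.real K := by
          refine norm_setIntegral_le_of_norm_le_const (hKc.measure_lt_top (μ := volume)) fun x hx => ?_
          refine (norm_inner_le_norm _ _).trans ?_
          exact mul_le_mul (hC x hx) (hφa x) (norm_nonneg _) ((norm_nonneg _).trans (hC x hx))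
      _ = _ := by ring
  refine le_of_forall_pos_le_add fun η hη => ?_
  rw [zero_add]
  set A := |C * volume.real K| + 1
  have hA : 0 < A := by positivity
  refine (hbound (η / A) (by positivity)).trans ?_
  calc C * volume.real K * (η / A) ≤ A * (η / A) := by
        gcongr; linarith [le_abs_self (C * volume.real K)]
    _ = η := by field_simp

theorem IsPHarmonicOn.mono (h : IsPHarmonicOn N p U u) (hVU : V ⊆ U) : IsPHarmonicOn N p V u :=
  ⟨h.1.mono hVU, fun ψ h1 h2 h3 => h.2 ψ h1 h2 (h3.trans hVU)⟩

theorem IsPHarmonicOn.const_mul (h : IsPHarmonicOn N p U u) {c : ℝ} (hc : 0 < c) :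
    IsPHarmonicOn N p U fun x => c * u x := by
  refine ⟨contDiffOn_const.mul h.1, fun ψ h1 h2 h3 => ?_⟩
  simp only [gradient_const_mul', N.flux_smul hc, real_inner_smul_left]
  rw [integral_const_mul, h.2 ψ h1 h2 h3, mul_zero]

theorem IsPHarmonicOn.comp_add_right (h : IsPHarmonicOn N p U u) (a : En n) :
    IsPHarmonicOn N p {x | x + a ∈ U} fun x => u (x + a) := by
  refine ⟨h.1.comp (contDiff_id.add contDiff_const).contDiffOn fun x hx => hx,
    fun ψ h1 h2 h3 => ?_⟩
  have e : tsupport (fun x => ψ (x + -a)) = (fun x => x + -a) ⁻¹' tsupport ψ :=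
    tsupport_comp_eq_preimage ψ (Homeomorph.addRight (-a))
  have := h.2 (fun x => ψ (x + -a)) (h1.comp (contDiff_id.add contDiff_const))
    (h2.comp_homeomorph (Homeomorph.addRight (-a))) (by
      rw [e]; intro x hx
      have := h3 hx
      simpa using this)
  rw [← integral_add_right_eq_self _ a] at this
  simpa [gradient_comp_add_right'] using this

theorem hasDerivAt_sq_max_zero (t : ℝ) :
    HasDerivAt (fun t : ℝ => max t 0 ^ 2) (2 * max t 0) t := by
  rcases lt_trichotomy t 0 with ht | rfl | ht
  · rw [max_eq_right ht.le, mul_zero]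
    refine (hasDerivAt_const t (0 : ℝ)).congr_of_eventuallyEq ?_
    filter_upwards [gt_mem_nhds ht] with s hs
    rw [max_eq_right hs.le]; simp
  · rw [max_self, mul_zero, hasDerivAt_iff_isLittleO]
    have : (fun x : ℝ => x ^ 2) =o[𝓝 0] fun x : ℝ => x := by
      simpa using Asymptotics.isLittleO_pow_pow (𝕜 := ℝ) (one_lt_two)
    refine Asymptotics.IsBigO.trans_isLittleO ?_ (by simpa using this)
    refine Asymptotics.IsBigO.of_bound 1 (Eventually.of_forall fun x => ?_)
    simp only [max_self, sub_zero, smul_zero, Real.norm_eq_abs, one_mul]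
    rcases le_total x 0 with hx | hx
    · rw [max_eq_right hx]; simpa using sq_nonneg x
    · rw [max_eq_left hx]; simp
  · rw [max_eq_left ht.le]
    have : HasDerivAt (fun s : ℝ => s ^ 2) (2 * t) t := by simpa using hasDerivAt_pow 2 t
    refine this.congr_of_eventuallyEq ?_
    filter_upwards [lt_mem_nhds ht] with s hs
    rw [max_eq_left hs.le]

theorem contDiff_sq_max_zero : ContDiff ℝ 1 fun t : ℝ => max t 0 ^ 2 := by
  rw [contDiff_one_iff_deriv]
  refine ⟨fun t => (hasDerivAt_sq_max_zero t).differentiableAt, ?_⟩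
  rw [show deriv (fun t : ℝ => max t 0 ^ 2) = fun t => 2 * max t 0 from
    funext fun t => (hasDerivAt_sq_max_zero t).deriv]
  fun_prop

/-- The function `(g⁺)²` on `U`, extended by zero. -/
def truncSq (U : Set (En n)) (g : En n → ℝ) : En n → ℝ := U.indicator fun x => max (g x) 0 ^ 2

variable {g : En n → ℝ} {K : Set (En n)}

theorem truncSq_eq_zero (hg : ∀ x ∈ U, x ∉ K → g x ≤ 0) {x : En n} (hx : x ∉ K) :
    truncSq U g x = 0 := by
  by_cases hU : x ∈ U
  · rw [truncSq, indicator_of_mem hU, max_eq_right (hg x hU hx)]; simp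
  · rw [truncSq, indicator_of_notMem hU]

theorem tsupport_truncSq_subset (hK : IsClosed K) (hg : ∀ x ∈ U, x ∉ K → g x ≤ 0) :
    tsupport (truncSq U g) ⊆ K :=
  closure_minimal (fun _ hx => by_contra fun h => hx (truncSq_eq_zero hg h)) hK

theorem truncSq_eventuallyEq (hU : IsOpen U) {x : En n} (hx : x ∈ U) :
    truncSq U g =ᶠ[𝓝 x] fun x => max (g x) 0 ^ 2 := by
  filter_upwards [hU.mem_nhds hx] with y hy
  rw [truncSq, indicator_of_mem hy]

theorem contDiff_truncSq (hU : IsOpen U) (hgd : ContDiffOn ℝ 1 g U) (hK : IsClosed K)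
    (hKU : K ⊆ U) (hg : ∀ x ∈ U, x ∉ K → g x ≤ 0) : ContDiff ℝ 1 (truncSq U g) := by
  rw [contDiff_iff_contDiffAt]
  intro x
  by_cases hx : x ∈ K
  · exact (contDiff_sq_max_zero.contDiffAt.comp x
      (hgd.contDiffAt (hU.mem_nhds (hKU hx)))).congr_of_eventuallyEq
        (truncSq_eventuallyEq hU (hKU hx))
  · refine (contDiffAt_const (c := (0 : ℝ))).congr_of_eventuallyEq ?_
    filter_upwards [hK.isOpen_compl.mem_nhds hx] with y hy
    exact truncSq_eq_zero hg hy

theorem gradient_truncSq (hU : IsOpen U) (hgd : ContDiffOn ℝ 1 g U) {x : En n} (hx : x ∈ U) :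
    gradient (truncSq U g) x = (2 * max (g x) 0) • gradient g x := by
  rw [(truncSq_eventuallyEq hU hx).gradient_eq]
  apply gradient_eq_of_forall_inner
  intro w
  have h1 := ((hgd.contDiffAt (hU.mem_nhds hx)).differentiableAt (by simp)).hasFDerivAt
  have h2 : fderiv ℝ (fun x => max (g x) 0 ^ 2) x = _ :=
    ((hasDerivAt_sq_max_zero (g x)).comp_hasFDerivAt x h1).fderiv
  rw [h2, real_inner_smul_left, inner_gradient]
  simp

end Testing

/-! ### Comparison principle -/

section Comparison

variable {n : ℕ} {N : MinkowskiNorm n} {p : ℝ} {U K : Set (En n)} {u u₁ u₂ g : En n → ℝ}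

theorem IsPHarmonicOn.setIntegral_truncSq (hp : 1 < p) (hU : IsOpen U)
    (h : IsPHarmonicOn N p U u) (hgd : ContDiffOn ℝ 1 g U) (hK : IsCompact K) (hKU : K ⊆ U)
    (hg : ∀ x ∈ U, x ∉ K → g x ≤ 0) :
    IntegrableOn (fun x => max (g x) 0 * ⟪N.flux p (gradient u x), gradient g x⟫) K ∧
    ∫ x in K, max (g x) 0 * ⟪N.flux p (gradient u x), gradient g x⟫ = 0 := by
  have hgc : ContinuousOn (fun x => max (g x) 0) K :=
    (continuous_id.max continuous_const).comp_continuousOn (hgd.continuousOn.mono hKU)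
  refine ⟨(hgc.mul (((continuousOn_flux_gradient hp hU h.1).mono hKU).inner
    ((hgd.continuousOn_gradient hU).mono hKU))).integrableOn_compact hK, ?_⟩
  have hs := tsupport_truncSq_subset hK.isClosed hg
  have key := h.2 (truncSq U g) (contDiff_truncSq hU hgd hK.isClosed hKU hg)
    (HasCompactSupport.of_support_subset_isCompact hK ((subset_tsupport _).trans hs))
    (hs.trans hKU)
  rw [← setIntegral_eq_integral_of_forall_compl_eq_zero (s := K) fun x hx => by
    rw [gradient_eq_zero_of_notMem_tsupport fun h => hx (hs h), inner_zero_right]] at key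
  have e : ∫ x in K, ⟪N.flux p (gradient u x), gradient (truncSq U g) x⟫ =
      ∫ x in K, 2 * (max (g x) 0 * ⟪N.flux p (gradient u x), gradient g x⟫) := by
    refine setIntegral_congr_fun hK.isClosed.measurableSet fun x hx => ?_
    rw [gradient_truncSq hU hgd (hKU hx), real_inner_smul_right, mul_assoc]
  rw [e, integral_const_mul] at key
  linarith

theorem IsPHarmonicOn.setIntegral_truncSq_sub (hp : 1 < p) (hU : IsOpen U)
    (h₁ : IsPHarmonicOn N p U u₁) (h₂ : IsPHarmonicOn N p U u₂)
    (hgd : ContDiffOn ℝ 1 g U) (hK : IsCompact K) (hKU : K ⊆ U)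
    (hg : ∀ x ∈ U, x ∉ K → g x ≤ 0) :
    ∫ x in K, max (g x) 0 *
      ⟪N.flux p (gradient u₁ x) - N.flux p (gradient u₂ x), gradient g x⟫ = 0 := by
  obtain ⟨i₁, e₁⟩ := h₁.setIntegral_truncSq hp hU hgd hK hKU hg
  obtain ⟨i₂, e₂⟩ := h₂.setIntegral_truncSq hp hU hgd hK hKU hg
  simp only [inner_sub_left, mul_sub]
  rw [integral_sub i₁ i₂, e₁, e₂, sub_zero]

theorem eq_zero_of_gradient_eq_zero {ψ : En n → ℝ} (hn : 0 < n) (hψ : ContDiff ℝ 1 ψ)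
    (hc : HasCompactSupport ψ) (h : ∀ x, gradient ψ x = 0) (x : En n) : ψ x = 0 := by
  have : Nonempty (Fin n) := ⟨⟨0, hn⟩⟩
  have : NoncompactSpace (En n) := NormedSpace.noncompactSpace ℝ (En n)
  have hcon : ∀ y, ψ x = ψ y := fun y =>
    is_const_of_fderiv_eq_zero (hψ.differentiable (by simp))
      (fun z => by rw [← norm_eq_zero, ← norm_gradient, h, norm_zero]) x y
  obtain ⟨y, hy⟩ : ∃ y, y ∉ tsupport ψ := by
    by_contra! hcon
    exact noncompact_univ (En n) (by
      rw [← eq_univ_of_forall hcon]; exact hc)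
  rw [hcon y, image_eq_zero_of_notMem_tsupport hy]

/-- Comparison principle for `p`-harmonic functions in exterior domains. -/
theorem IsPHarmonicOn.le_of_le_sphere (hn : 0 < n) (hp : 1 < p) (hU : IsOpen U) {R : ℝ}
    (hR : ∀ x : En n, R ≤ ‖x‖ → x ∈ U) (h₁ : IsPHarmonicOn N p U u₁)
    (h₂ : IsPHarmonicOn N p U u₂) (hs : ∀ x : En n, ‖x‖ = R → u₁ x ≤ u₂ x)
    (hinf : ∀ ε > 0, ∀ᶠ x in cocompact (En n), u₁ x - u₂ x < ε) {x : En n} (hx : R ≤ ‖x‖) :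
    u₁ x ≤ u₂ x := by
  refine le_of_forall_pos_le_add fun ε hε => ?_
  set W : Set (En n) := {x | R < ‖x‖} with hW
  have hWo : IsOpen W := isOpen_lt continuous_const continuous_norm
  have hWU : W ⊆ U := fun x hx => hR x (le_of_lt hx)
  set g : En n → ℝ := fun x => u₁ x - u₂ x - ε with hgdef
  have hgU : ContDiffOn ℝ 1 g U := (h₁.1.sub h₂.1).sub contDiffOn_const
  have hgW : ContDiffOn ℝ 1 g W := hgU.mono hWU
  set C : Set (En n) := {x | R ≤ ‖x‖} with hCdef
  have hCc : IsClosed C := isClosed_le continuous_const continuous_norm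
  have hCU : C ⊆ U := fun x hx => hR x hx
  set K : Set (En n) := C ∩ g ⁻¹' Ici 0 with hKdef
  have hKcl : IsClosed K := (hgU.continuousOn.mono hCU).preimage_isClosed_of_isClosed hCc isClosed_Ici
  have hKc : IsCompact K := by
    obtain ⟨t, ht, hts⟩ := mem_cocompact.1 (hinf ε hε)
    refine ht.of_isClosed_subset hKcl fun y hy => ?_
    by_contra hyt
    have h1 : u₁ y - u₂ y < ε := hts hyt
    have h2 : 0 ≤ u₁ y - u₂ y - ε := hy.2
    linarith
  have hKW : K ⊆ W := fun y hy => by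
    refine lt_of_le_of_ne (show R ≤ ‖y‖ from hy.1) fun h => ?_
    have h1 := hs y h.symm
    have h2 : 0 ≤ u₁ y - u₂ y - ε := hy.2
    linarith
  have hgK : ∀ y ∈ W, y ∉ K → g y ≤ 0 := fun y hy hyK => by
    by_contra! h
    exact hyK ⟨le_of_lt (show R < ‖y‖ from hy), h.le⟩
  have hgrad : ∀ y ∈ W, gradient g y = gradient u₁ y - gradient u₂ y := fun y hy => by
    have d₁ := (h₁.1.contDiffAt (hU.mem_nhds (hWU hy))).differentiableAt (by simp)
    have d₂ := (h₂.1.contDiffAt (hU.mem_nhds (hWU hy))).differentiableAt (by simp)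
    have e : fderiv ℝ g y = _ := fderiv_sub_const (f := fun x => u₁ x - u₂ x) ε
    rw [← gradient_sub' d₁ d₂, gradient_eq_rieszSharp, gradient_eq_rieszSharp, e]
  have hInt := (h₁.mono hWU).setIntegral_truncSq_sub hp hWo (h₂.mono hWU) hgW hKc hKW hgK
  set ψ := truncSq W g
  have hψ : ContDiff ℝ 1 ψ := contDiff_truncSq hWo hgW hKcl hKW hgK
  have hψs : tsupport ψ ⊆ K := tsupport_truncSq_subset hKcl hgK
  have hψc : HasCompactSupport ψ :=
    HasCompactSupport.of_support_subset_isCompact hKc ((subset_tsupport _).trans hψs)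
  set f : En n → ℝ := fun x => max (g x) 0 *
      ⟪N.flux p (gradient u₁ x) - N.flux p (gradient u₂ x), gradient g x⟫ with hf
  have hfW : ContinuousOn f W := by
    refine ((continuous_id.max continuous_const).comp_continuousOn hgW.continuousOn).mul (ContinuousOn.inner ?_
      (hgW.continuousOn_gradient hWo))
    exact (continuousOn_flux_gradient hp hWo (h₁.1.mono hWU)).sub
      (continuousOn_flux_gradient hp hWo (h₂.1.mono hWU))
  have hf0 : ∀ y ∈ W, 0 ≤ f y := fun y hy => by
    simp only [hf]; rw [hgrad y hy]
    exact mul_nonneg (le_max_right _ _) (N.inner_flux_sub_nonneg hp _ _)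
  have hfz : ∀ y ∈ W, y ∉ K → f y = 0 := fun y hy hyK => by
    simp only [hf]; rw [max_eq_right (hgK y hy hyK), zero_mul]
  have hfint : IntegrableOn f K := (hfW.mono hKW).integrableOn_compact hKc
  have hWint : IntegrableOn f W := by
    refine hfint.of_forall_sdiff_eq_zero hWo.measurableSet fun y hy => hfz y hy.1 hy.2
  have hW0 : ∫ y in W, f y = 0 := by
    rw [setIntegral_eq_of_subset_of_forall_sdiff_eq_zero hWo.measurableSet hKW
      fun y hy => hfz y hy.1 hy.2]
    exact hInt
  have hfzero : ∀ y ∈ W, f y = 0 := by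
    have hae : f =ᵐ[volume.restrict W] 0 :=
      (setIntegral_eq_zero_iff_of_nonneg_ae
        ((ae_restrict_mem hWo.measurableSet).mono hf0) hWint).1 hW0
    have := Measure.eqOn_open_of_ae_eq hae hWo hfW continuousOn_const
    exact fun y hy => this hy
  have hψ0 : ∀ y, gradient ψ y = 0 := fun y => by
    by_cases hy : y ∈ W
    · rw [gradient_truncSq hWo hgW hy]
      have := hfzero y hy
      simp only [hf] at this
      rcases mul_eq_zero.1 this with h | h
      · rw [h]; simp
      · rw [hgrad y hy] at h ⊢
        by_cases hne : gradient u₁ y = gradient u₂ y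
        · rw [hne]; simp
        · exact absurd h (N.inner_flux_sub_pos hp hne).ne'
    · exact gradient_eq_zero_of_notMem_tsupport fun h => hy (hKW (hψs h))
  rcases hx.eq_or_lt with hx | hx
  · linarith [hs x hx.symm]
  have := eq_zero_of_gradient_eq_zero hn hψ hψc hψ0 x
  rw [show ψ x = max (g x) 0 ^ 2 from indicator_of_mem (show x ∈ W from hx) _] at this
  have : max (g x) 0 = 0 := by simpa using this
  have : u₁ x - u₂ x - ε ≤ 0 := max_eq_right_iff.1 this
  linarith

end Comparison

/-! ### Logarithmic gradient bound in exterior domains -/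

section GradientBound

variable {n : ℕ} {N : MinkowskiNorm n} {p : ℝ} {U : Set (En n)} {v : En n → ℝ}

theorem inner_gradient_le_of_eventually_slope_le {x w : En n} {c : ℝ}
    (hv : DifferentiableAt ℝ v x)
    (h : ∀ᶠ s : ℝ in 𝓝[>] 0, (v (x + s • w) - v x) / s ≤ c) : ⟪gradient v x, w⟫ ≤ c := by
  rw [inner_gradient]
  have h1 : HasDerivAt (fun s : ℝ => v (x + s • w)) (fderiv ℝ v x w) 0 :=
    hv.hasFDerivAt.hasLineDerivAt w
  have h2 := (hasDerivAt_iff_tendsto_slope.1 h1).mono_left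
    (nhdsWithin_mono (0 : ℝ) (s := Ioi 0) fun s hs => (mem_Ioi.1 hs).ne')
  refine le_of_tendsto h2 ?_
  filter_upwards [h] with s hs
  simpa [slope_def_field] using hs

theorem norm_gradient_le_of_inner_le {x : En n} {c : ℝ} (h : ∀ w, ⟪gradient v x, w⟫ ≤ c * ‖w‖)
    (hc : 0 ≤ c) : ‖gradient v x‖ ≤ c := by
  have h1 := h (gradient v x)
  rw [real_inner_self_eq_norm_sq, sq] at h1
  rcases (norm_nonneg (gradient v x)).eq_or_lt with h0 | h0
  · rw [← h0]; exact hc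
  · exact le_of_mul_le_mul_right h1 h0

theorem abs_sub_le_of_norm_gradient_le {s : Set (En n)} (hs : Convex ℝ s) {L : ℝ}
    (hd : ∀ x ∈ s, DifferentiableAt ℝ v x) (hL : ∀ x ∈ s, ‖gradient v x‖ ≤ L) {x y : En n}
    (hx : x ∈ s) (hy : y ∈ s) : |v y - v x| ≤ L * ‖y - x‖ :=
  hs.norm_image_sub_le_of_norm_fderiv_le hd (fun z hz => by rw [← norm_gradient]; exact hL z hz)
    hx hy

theorem isCompact_annulus (a b : ℝ) : IsCompact {x : En n | a ≤ ‖x‖ ∧ ‖x‖ ≤ b} := by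
  refine (isCompact_closedBall (0 : En n) b).of_isClosed_subset ?_ fun x hx => by
    simpa using hx.2
  exact (isClosed_le continuous_const continuous_norm).inter
    (isClosed_le continuous_norm continuous_const)

theorem IsPHarmonicOn.exists_norm_gradient_le (hn : 0 < n) (hp : 1 < p) (hU : IsOpen U) {R : ℝ}
    (hR0 : 0 < R) (hR : ∀ x : En n, R ≤ ‖x‖ → x ∈ U) (h : IsPHarmonicOn N p U v)
    (hpos : ∀ x ∈ U, 0 < v x) (hlim : Tendsto v (cocompact (En n)) (𝓝 0)) :
    ∃ C : ℝ, 0 < C ∧ ∀ x : En n, R + 1 ≤ ‖x‖ → ‖gradient v x‖ ≤ C * v x := by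
  set A : Set (En n) := {x : En n | R ≤ ‖x‖ ∧ ‖x‖ ≤ R + 2} with hA
  have hAc : IsCompact A := isCompact_annulus _ _
  have hAU : A ⊆ U := fun x hx => hR x hx.1
  obtain ⟨L, hL⟩ := hAc.exists_bound_of_continuousOn ((h.1.continuousOn_gradient hU).mono hAU)
  have hAne : A.Nonempty := by
    have : Nontrivial (En n) := by
      have : Nonempty (Fin n) := ⟨⟨0, hn⟩⟩
      infer_instance
    obtain ⟨x, hx⟩ := (NormedSpace.sphere_nonempty (E := En n) (x := 0) (r := R)).2 hR0.le
    have hx' : ‖x‖ = R := by simpa using hx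
    exact ⟨x, hx'.ge, by linarith⟩
  obtain ⟨x₀, hx₀, hmin⟩ := hAc.exists_isMinOn hAne (h.1.continuousOn.mono hAU)
  have hc : 0 < v x₀ := hpos x₀ (hAU hx₀)
  have hL0 : 0 ≤ L := (norm_nonneg _).trans (hL x₀ hx₀)
  have hdiff : ∀ x ∈ U, DifferentiableAt ℝ v x := fun x hx =>
    (h.1.contDiffAt (hU.mem_nhds hx)).differentiableAt (by simp)
  set C := L / v x₀ + 1
  have hC : 0 < C := by positivity
  have hCL : L ≤ C * v x₀ := by
    have : L / v x₀ * v x₀ = L := by field_simp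
    simp only [C]; rw [add_mul, this]; linarith
  have shift : ∀ w : En n, ‖w‖ ≤ 1 → ∀ x : En n, R + 1 ≤ ‖x‖ →
      v (x + w) ≤ (1 + C * ‖w‖) * v x := by
    intro w hw x hx
    have hball : ∀ y z : En n, R + 1 ≤ ‖y‖ → ‖z - y‖ ≤ 1 → R ≤ ‖z‖ := fun y z hy hz => by
      have := norm_sub_norm_le y z
      rw [norm_sub_rev] at this
      linarith
    have hW : IsOpen (U ∩ {x | x + w ∈ U}) := hU.inter (hU.preimage (by fun_prop))
    refine IsPHarmonicOn.le_of_le_sphere hn hp hW (R := R + 1) (fun y hy => ?_)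
      ((h.comp_add_right w).mono inter_subset_right)
      ((h.const_mul (c := 1 + C * ‖w‖) (by positivity)).mono inter_subset_left) ?_ ?_ hx
    · exact ⟨hR y (by linarith), hR _ (hball y _ hy (by simpa using hw))⟩
    · intro y hy
      have hsub : closedBall y 1 ⊆ A := fun z hz => by
        have hz' : ‖z - y‖ ≤ 1 := by rw [← dist_eq_norm]; exact hz
        refine ⟨hball y z hy.ge hz', ?_⟩
        have := norm_sub_norm_le z y
        linarith
      have h1 := abs_sub_le_of_norm_gradient_le (convex_closedBall y 1)
        (fun z hz => hdiff z (hAU (hsub hz))) (fun z hz => hL z (hsub hz))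
        (x := y) (y := y + w) (by simp) (by simpa using hw)
      have h2 : v x₀ ≤ v y := hmin (hsub (by simp))
      rw [add_sub_cancel_left] at h1
      have h3 := (le_abs_self _).trans h1
      have h4 : L * ‖w‖ ≤ C * v y * ‖w‖ := by
        gcongr; exact hCL.trans (by gcongr)
      nlinarith
    · intro ε hε
      have t1 : Tendsto (fun x => v (x + w)) (cocompact (En n)) (𝓝 0) :=
        hlim.comp (Homeomorph.addRight w).isClosedEmbedding.tendsto_cocompact
      have t2 := t1.sub (hlim.const_mul (1 + C * ‖w‖))
      simp only [mul_zero, sub_zero] at t2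
      exact t2.eventually (gt_mem_nhds hε)
  refine ⟨C, hC, fun x hx => ?_⟩
  have hxU : x ∈ U := hR x (by linarith)
  have hvx := hpos x hxU
  refine norm_gradient_le_of_inner_le (fun w => ?_) (by positivity)
  refine inner_gradient_le_of_eventually_slope_le (hdiff x hxU) ?_
  have hcont : Tendsto (fun s : ℝ => ‖s • w‖) (𝓝[>] 0) (𝓝 0) := by
    have : Continuous fun s : ℝ => ‖s • w‖ := by fun_prop
    simpa using (this.tendsto 0).mono_left nhdsWithin_le_nhds
  filter_upwards [self_mem_nhdsWithin, hcont.eventually (gt_mem_nhds one_pos)] with s hs hs1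
  have hs : 0 < s := hs
  rw [div_le_iff₀ hs]
  have := shift (s • w) hs1.le x hx
  rw [norm_smul, Real.norm_of_nonneg hs.le] at this
  linarith

end GradientBound

/-! ### The dual norm -/

namespace MinkowskiNorm

variable {n : ℕ} (N : MinkowskiNorm n)

theorem flux_two : N.flux 2 = N.dualMap := by
  funext ξ
  rw [flux, dualMap, show (2 : ℝ) - 1 = 1 by norm_num, Real.rpow_one]

theorem dualMap_zero : N.dualMap 0 = 0 := by rw [dualMap, N.map_zero, zero_smul]

theorem inner_dualMap_self (ξ : En n) : ⟪N.dualMap ξ, ξ⟫ = N.F ξ ^ 2 := by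
  rw [← N.flux_two, N.inner_flux_self one_lt_two, ← Real.rpow_natCast]; norm_num

theorem dualMap_injective : Function.Injective N.dualMap := by
  intro ξ η h
  by_contra hne
  have := N.inner_flux_sub_pos one_lt_two hne
  rw [N.flux_two, h, sub_self, inner_zero_left] at this
  exact lt_irrefl _ this

theorem exists_dualMap_eq {x : En n} (hx : x ≠ 0) : ∃ ξ, N.dualMap ξ = x := by
  obtain ⟨c, C, hc, hC, hN⟩ := N.exists_norm_equiv
  set φ : En n → ℝ := fun ξ => ⟪x, ξ⟫ - N.F ξ ^ 2 / 2 with hφ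
  have hcont : Continuous φ :=
    (continuous_const.inner continuous_id).sub ((N.continuous.pow 2).div_const 2)
  set ρ := 2 * ‖x‖ / c ^ 2 with hρ
  have hout : ∀ ξ, ρ < ‖ξ‖ → φ ξ ≤ 0 := fun ξ hξ => by
    have h1 := real_inner_le_norm x ξ
    have h2 : c ^ 2 * ‖ξ‖ ^ 2 ≤ N.F ξ ^ 2 := by
      rw [← mul_pow]
      exact pow_le_pow_left₀ (by positivity) (hN ξ).1 2
    have h3 : 2 * ‖x‖ ≤ c ^ 2 * ‖ξ‖ := by
      rw [hρ, div_lt_iff₀ (by positivity)] at hξ; linarith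
    have h4 := mul_le_mul_of_nonneg_right h3 (norm_nonneg ξ)
    simp only [hφ]; nlinarith
  obtain ⟨ξ, -, hmax⟩ := (isCompact_closedBall (0 : En n) ρ).exists_isMaxOn
    ⟨0, by simp; positivity⟩ hcont.continuousOn
  have hφ0 : φ 0 = 0 := by simp [hφ, N.map_zero]
  have hglob : ∀ η, φ η ≤ φ ξ := fun η => by
    by_cases h : ‖η‖ ≤ ρ
    · exact hmax (by simpa using h)
    · refine (hout η (not_le.1 h)).trans ?_
      rw [← hφ0]; exact hmax (by simp; positivity)
  have hFx := N.pos x hx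
  have hnx := norm_pos_iff.2 hx
  have hξ : ξ ≠ 0 := by
    rintro rfl
    have := hglob ((‖x‖ ^ 2 / N.F x ^ 2) • x)
    rw [hφ0] at this
    simp only [hφ] at this
    rw [N.homog _ (by positivity), real_inner_smul_right, real_inner_self_eq_norm_sq] at this
    have e : ‖x‖ ^ 2 / N.F x ^ 2 * ‖x‖ ^ 2 - (‖x‖ ^ 2 / N.F x ^ 2 * N.F x) ^ 2 / 2 =
        ‖x‖ ^ 4 / N.F x ^ 2 / 2 := by field_simp; ring
    rw [e] at this
    have : 0 < ‖x‖ ^ 4 / N.F x ^ 2 / 2 := by positivity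
    linarith
  refine ⟨ξ, ?_⟩
  have hloc : IsLocalMax φ ξ := Eventually.of_forall hglob
  have h0 := hloc.fderiv_eq_zero
  have hQ : DifferentiableAt ℝ (fun η => N.F η ^ 2 / 2) ξ :=
    ((((N.contDiffAt hξ).pow 2).div_const 2).differentiableAt (by simp))
  have hI : HasFDerivAt (fun η => ⟪x, η⟫) (innerSL ℝ x) ξ := (innerSL ℝ x).hasFDerivAt
  have h1 : fderiv ℝ φ ξ = _ := (hI.sub hQ.hasFDerivAt).fderiv
  refine ext_inner_right ℝ fun w => ?_
  rw [← N.gradient_sq_half hξ, inner_gradient]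
  have h2 := congrArg (fun l : En n →L[ℝ] ℝ => l w) (h1.symm.trans h0)
  simp at h2
  linarith

theorem dualMap_bijective : Function.Bijective N.dualMap :=
  ⟨N.dualMap_injective, fun x => by
    by_cases hx : x = 0
    · exact ⟨0, by rw [N.dualMap_zero, hx]⟩
    · exact N.exists_dualMap_eq hx⟩

/-- The inverse of the duality map. -/
def dualInv (x : En n) : En n := (Equiv.ofBijective _ N.dualMap_bijective).symm x

theorem dualMap_dualInv (x : En n) : N.dualMap (N.dualInv x) = x :=
  (Equiv.ofBijective _ N.dualMap_bijective).apply_symm_apply x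

theorem dualInv_ne_zero {x : En n} (hx : x ≠ 0) : N.dualInv x ≠ 0 := fun h => hx (by
  rw [← N.dualMap_dualInv x, h, N.dualMap_zero])

theorem contDiffAt_dualInv {x : En n} (hx : x ≠ 0) : ContDiffAt ℝ 1 N.dualInv x := by
  set ξ := N.dualInv x with hξ
  have hξ0 : ξ ≠ 0 := N.dualInv_ne_zero hx
  have hinj : Function.Injective (fderiv ℝ N.dualMap ξ) := by
    rw [injective_iff_map_eq_zero]
    intro w hw
    by_contra h
    have := N.inner_fderiv_dualMap_pos hξ0 h
    rw [hw, inner_zero_left] at this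
    exact lt_irrefl _ this
  let e : En n ≃L[ℝ] En n :=
    (LinearEquiv.ofInjectiveEndo (fderiv ℝ N.dualMap ξ : En n →ₗ[ℝ] En n) hinj
      ).toContinuousLinearEquiv
  have hcd := N.contDiffAt_dualMap hξ0
  have hd : HasFDerivAt N.dualMap (e : En n →L[ℝ] En n) ξ := by
    have : (e : En n →L[ℝ] En n) = fderiv ℝ N.dualMap ξ := by ext w; rfl
    rw [this]
    exact (hcd.differentiableAt (by simp)).hasFDerivAt
  have h1 := hcd.to_localInverse hd (by simp)
  rw [show N.dualMap ξ = x from N.dualMap_dualInv x] at h1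
  refine h1.congr_of_eventuallyEq ?_
  have h2 := (hcd.hasStrictFDerivAt' hd (by simp)).eventually_right_inverse
  rw [show N.dualMap ξ = x from N.dualMap_dualInv x] at h2
  filter_upwards [h2] with y hy
  exact N.dualMap_injective ((N.dualMap_dualInv y).trans hy.symm)

/-- The dual norm, as `F` composed with the inverse of the duality map. -/
def dualNorm (x : En n) : ℝ := N.F (N.dualInv x)

theorem dualNorm_pos {x : En n} (hx : x ≠ 0) : 0 < N.dualNorm x := N.pos _ (N.dualInv_ne_zero hx)

theorem contDiffAt_dualNorm {x : En n} (hx : x ≠ 0) : ContDiffAt ℝ 1 N.dualNorm x :=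
  ((N.contDiffAt (N.dualInv_ne_zero hx)).of_le (by exact_mod_cast le_top)).comp x
    (N.contDiffAt_dualInv hx)

theorem inner_dualInv_self (x : En n) : ⟪N.dualInv x, x⟫ = N.dualNorm x ^ 2 := by
  rw [dualNorm, ← inner_dualMap_self, N.dualMap_dualInv, real_inner_comm]

theorem dualNorm_smul_gradient {x : En n} (hx : x ≠ 0) :
    N.dualNorm x • gradient N.dualNorm x = N.dualInv x := by
  have hξ0 := N.dualInv_ne_zero hx
  have hd := ((N.contDiffAt_dualInv hx).differentiableAt (by simp)).hasFDerivAt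
  have hT := ((N.contDiffAt_dualMap hξ0).differentiableAt (by simp)).hasFDerivAt
  have hid : (fderiv ℝ N.dualMap (N.dualInv x)).comp (fderiv ℝ N.dualInv x) =
      ContinuousLinearMap.id ℝ (En n) := by
    have h1 := hT.comp x hd
    have e : N.dualMap ∘ N.dualInv = id := funext N.dualMap_dualInv
    rw [e] at h1
    exact h1.unique (hasFDerivAt_id x)
  refine ext_inner_right ℝ fun w => ?_
  have h1 : fderiv ℝ N.dualNorm x = _ :=
    ((N.differentiableAt hξ0).hasFDerivAt.comp x hd).fderiv
  rw [real_inner_smul_left, inner_gradient, h1, ContinuousLinearMap.comp_apply, ← inner_gradient,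
    dualNorm, ← real_inner_smul_left]
  change ⟪N.dualMap (N.dualInv x), _⟫ = _
  have h2 : fderiv ℝ N.dualMap (N.dualInv x) (fderiv ℝ N.dualInv x w) = w := by
    rw [← ContinuousLinearMap.comp_apply, hid]; rfl
  rw [← N.fderiv_dualMap_self hξ0, N.inner_fderiv_dualMap_symm hξ0, h2, real_inner_comm]

theorem inner_gradient_dualNorm_self {x : En n} (hx : x ≠ 0) :
    ⟪gradient N.dualNorm x, x⟫ = N.dualNorm x := by
  have h := N.inner_dualInv_self x
  rw [← N.dualNorm_smul_gradient hx, real_inner_smul_left, sq] at h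
  exact mul_left_cancel₀ (N.dualNorm_pos hx).ne' h

theorem exists_dualNorm_equiv :
    ∃ c C : ℝ, 0 < c ∧ 0 < C ∧ ∀ x, c * ‖x‖ ≤ N.dualNorm x ∧ N.dualNorm x ≤ C * ‖x‖ := by
  obtain ⟨c, C, hc, hC, hN⟩ := N.exists_norm_equiv
  obtain ⟨B, hB⟩ := (isCompact_closedBall (0 : En n) 1).exists_bound_of_continuousOn
    (N.continuous_flux one_lt_two).continuousOn
  have hB' : ∀ ξ, ‖N.dualMap ξ‖ ≤ (|B| + 1) * ‖ξ‖ := fun ξ => by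
    by_cases hξ : ξ = 0
    · rw [hξ, N.dualMap_zero]; simp
    · have hpos := norm_pos_iff.2 hξ
      have h1 := N.flux_smul (p := 2) hpos (‖ξ‖⁻¹ • ξ)
      rw [smul_smul, mul_inv_cancel₀ hpos.ne', one_smul] at h1
      have h2 := hB (‖ξ‖⁻¹ • ξ) (by simp [norm_smul, hpos.ne'])
      rw [← N.flux_two, h1, norm_smul, show (2 : ℝ) - 1 = 1 by norm_num, Real.rpow_one,
        Real.norm_of_nonneg hpos.le, mul_comm]
      gcongr
      linarith [le_abs_self B]
  refine ⟨c / (|B| + 1), 1 / c, by positivity, by positivity, fun x => ?_⟩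
  have h1 := hB' (N.dualInv x)
  rw [N.dualMap_dualInv] at h1
  have h2 := (hN (N.dualInv x)).1
  have h3 := N.inner_dualInv_self x
  have h4 := real_inner_le_norm (N.dualInv x) x
  change c * _ ≤ N.dualNorm x at h2
  constructor
  · rw [div_mul_eq_mul_div, div_le_iff₀ (by positivity)]
    calc c * ‖x‖ ≤ c * ((|B| + 1) * ‖N.dualInv x‖) := by gcongr
      _ = (c * ‖N.dualInv x‖) * (|B| + 1) := by ring
      _ ≤ _ := by gcongr
  · have h0 : 0 ≤ N.dualNorm x := N.nonneg _
    rw [div_mul_eq_mul_div, le_div_iff₀ hc, one_mul]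
    rcases h0.eq_or_lt with h | h
    · rw [← h]; simp
    · refine le_of_mul_le_mul_left ?_ h
      nlinarith [norm_nonneg x]

end MinkowskiNorm

/-! ### The fundamental solution -/

theorem ContinuousLinearMap.apply_eq_sum_single {n : ℕ} (l : En n →L[ℝ] ℝ) (x : En n) :
    l x = ∑ i, x i * l (EuclideanSpace.single i 1) := by
  conv_lhs => rw [← (EuclideanSpace.basisFun (Fin n) ℝ).sum_repr x]
  simp

namespace MinkowskiNorm

variable {n : ℕ} (N : MinkowskiNorm n)

theorem contDiffAt_dualNorm_rpow (s : ℝ) {x : En n} (hx : x ≠ 0) :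
    ContDiffAt ℝ 1 (fun y => N.dualNorm y ^ s) x :=
  (N.contDiffAt_dualNorm hx).rpow_const_of_ne (N.dualNorm_pos hx).ne'

theorem gradient_dualNorm_rpow (s : ℝ) {x : En n} (hx : x ≠ 0) :
    gradient (fun y => N.dualNorm y ^ s) x = (s * N.dualNorm x ^ (s - 1)) • gradient N.dualNorm x := by
  have h := ((N.contDiffAt_dualNorm hx).differentiableAt (by simp)).hasFDerivAt.rpow_const
    (p := s) (Or.inl (N.dualNorm_pos hx).ne')
  rw [gradient_eq_rieszSharp, h.fderiv, map_smul, gradient_eq_rieszSharp]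

/-- The vector field `x / F°(x)ⁿ` is weakly divergence free away from the origin. -/
theorem integral_dualNorm_rpow_mul_inner {ψ : En n → ℝ} (hψ : ContDiff ℝ 1 ψ)
    (hc : HasCompactSupport ψ) (hs : tsupport ψ ⊆ {0}ᶜ) :
    ∫ x, N.dualNorm x ^ (-(n : ℝ)) * ⟪x, gradient ψ x⟫ = 0 := by
  set h : En n → ℝ := fun x => N.dualNorm x ^ (-(n : ℝ)) with hh
  have hhd : ContDiffOn ℝ 1 h {0}ᶜ := fun x hx =>
    (N.contDiffAt_dualNorm_rpow _ hx).contDiffWithinAt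
  have hhD : ∀ x ∈ ({0}ᶜ : Set (En n)), DifferentiableAt ℝ h x := fun x hx =>
    (N.contDiffAt_dualNorm_rpow _ hx).differentiableAt (by simp)
  have hsingle : ∀ i : Fin n, (EuclideanSpace.single i (1 : ℝ) : En n) i = 1 := fun i => by simp
  set f : Fin n → En n → ℝ := fun i x => h x * x i with hf
  have hcoord : ∀ (i : Fin n) x, HasFDerivAt (fun y : En n => y i)
      (EuclideanSpace.proj i : En n →L[ℝ] ℝ) x := fun i x =>
    (EuclideanSpace.proj i : En n →L[ℝ] ℝ).hasFDerivAt
  have hfd : ∀ i, ContDiffOn ℝ 1 (f i) {0}ᶜ := fun i =>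
    hhd.mul (EuclideanSpace.proj i : En n →L[ℝ] ℝ).contDiff.contDiffOn
  have hfD : ∀ i, ∀ x ∈ ({0}ᶜ : Set (En n)),
      fderiv ℝ (f i) x (EuclideanSpace.single i 1) =
        h x + x i * fderiv ℝ h x (EuclideanSpace.single i 1) := fun i x hx => by
    have := ((hhD x hx).hasFDerivAt.mul (hcoord i x)).fderiv
    have e : fderiv ℝ (f i) x = _ := this
    rw [e]
    simp
  have hInt : ∀ g : En n → ℝ, ContinuousOn g {0}ᶜ → (∀ x, x ∉ tsupport ψ → g x = 0) →
      Integrable g := fun g hg hg0 =>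
    ((hg.mono hs).integrableOn_compact hc).integrable_of_forall_notMem_eq_zero hg0
  have hψ0 : ∀ x, x ∉ tsupport ψ → ψ x = 0 := fun x hx => image_eq_zero_of_notMem_tsupport hx
  have hψ0' : ∀ x, x ∉ tsupport ψ → fderiv ℝ ψ x = 0 := fun x hx => by
    by_contra h
    exact hx (support_fderiv_subset ℝ h)
  have hψf : ContinuousOn (fderiv ℝ ψ) {0}ᶜ := (hψ.continuous_fderiv (by simp)).continuousOn
  have hff : ∀ i, ContinuousOn (fderiv ℝ (f i)) {0}ᶜ := fun i =>
    (hfd i).continuousOn_fderiv_of_isOpen isOpen_compl_singleton (by simp)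
  have i1 : ∀ i, Integrable fun x => fderiv ℝ (f i) x (EuclideanSpace.single i 1) * ψ x := fun i =>
    hInt _ (((hff i).clm_apply continuousOn_const).mul hψ.continuous.continuousOn)
      fun x hx => by rw [hψ0 x hx, mul_zero]
  have i2 : ∀ i, Integrable fun x => f i x * fderiv ℝ ψ x (EuclideanSpace.single i 1) := fun i =>
    hInt _ ((hfd i).continuousOn.mul (hψf.clm_apply continuousOn_const))
      fun x hx => by rw [hψ0' x hx, _root_.zero_apply, mul_zero]
  have i3 : ∀ i, Integrable fun x => f i x * ψ x := fun i =>
    hInt _ ((hfd i).continuousOn.mul hψ.continuous.continuousOn)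
      fun x hx => by rw [hψ0 x hx, mul_zero]
  have key := fun i => integral_mul_fderiv_eq_neg_fderiv_mul_of_integrable (i1 i) (i2 i) (i3 i)
    (fun x hx => ((hfd i).contDiffAt (isOpen_compl_singleton.mem_nhds (hs hx))).differentiableAt
      (by simp)) (fun x _ => hψ.differentiable (by simp) x)
  have hdiv : ∀ x, ∑ i, fderiv ℝ (f i) x (EuclideanSpace.single i 1) * ψ x = 0 := fun x => by
    by_cases hx : x ∈ tsupport ψ
    · have hx0 : x ≠ 0 := hs hx
      rw [← Finset.sum_mul, Finset.sum_congr rfl fun i _ => hfD i x hx0, Finset.sum_add_distrib,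
        ← ContinuousLinearMap.apply_eq_sum_single, ← inner_gradient,
        N.gradient_dualNorm_rpow _ hx0, real_inner_smul_left,
        N.inner_gradient_dualNorm_self hx0, Real.rpow_sub_one (N.dualNorm_pos hx0).ne']
      have := (N.dualNorm_pos hx0).ne'
      simp only [hh, Finset.sum_const, Finset.card_univ, Fintype.card_fin, nsmul_eq_mul]
      field_simp
      ring
    · simp [hψ0 x hx]
  have e : ∀ x, h x * ⟪x, gradient ψ x⟫ =
      ∑ i, f i x * fderiv ℝ ψ x (EuclideanSpace.single i 1) := fun x => by
    rw [real_inner_comm, inner_gradient, ContinuousLinearMap.apply_eq_sum_single, Finset.mul_sum]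
    exact Finset.sum_congr rfl fun i _ => by simp only [hf]; ring
  change ∫ x, h x * ⟪x, gradient ψ x⟫ = 0
  simp only [e]
  rw [integral_finsetSum _ fun i _ => i2 i, Finset.sum_congr rfl fun i _ => key i,
    Finset.sum_neg_distrib, ← integral_finsetSum _ fun i _ => i1 i]
  simp only [hdiv, integral_zero, neg_zero]

theorem isPHarmonicOn_dualNorm_rpow {p : ℝ} (hp : 1 < p) (hpn : p < n) :
    IsPHarmonicOn N p {0}ᶜ fun x => N.dualNorm x ^ (-((n - p) / (p - 1))) := by
  have hp' : 0 < p - 1 := by linarith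
  set γ : ℝ := (n - p) / (p - 1) with hγ
  have hγ0 : 0 < γ := div_pos (by linarith) hp'
  refine ⟨fun x hx => (N.contDiffAt_dualNorm_rpow _ hx).contDiffWithinAt, fun ψ hψ hc hs => ?_⟩
  have hflux : ∀ x : En n, x ≠ 0 → N.flux p (gradient (fun x => N.dualNorm x ^ (-γ)) x) =
      (-(γ ^ (p - 1)) * N.dualNorm x ^ (-(n : ℝ))) • x := fun x hx => by
    have hG := N.dualNorm_pos hx
    have e1 : gradient (fun x => N.dualNorm x ^ (-γ)) x =
        -((γ * N.dualNorm x ^ (-γ - 2)) • N.dualInv x) := by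
      rw [N.gradient_dualNorm_rpow _ hx, ← N.dualNorm_smul_gradient hx, smul_smul, ← neg_smul,
        mul_assoc, ← Real.rpow_add_one hG.ne']
      congr 1
      rw [show -γ - 2 + 1 = -γ - 1 by ring]; ring
    rw [e1, N.flux_neg, N.flux_smul (by positivity), N.flux_eq p (N.dualInv_ne_zero hx),
      N.dualMap_dualInv, smul_smul, ← neg_smul]
    congr 1
    rw [Real.mul_rpow hγ0.le (by positivity), ← Real.rpow_mul hG.le]
    change -(γ ^ (p - 1) * N.dualNorm x ^ ((-γ - 2) * (p - 1)) * N.dualNorm x ^ (p - 2)) = _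
    rw [mul_assoc, ← Real.rpow_add hG, neg_mul]
    congr 3
    rw [hγ]; field_simp; ring
  have e : ∀ x, ⟪N.flux p (gradient (fun x => N.dualNorm x ^ (-γ)) x), gradient ψ x⟫ =
      -(γ ^ (p - 1)) * (N.dualNorm x ^ (-(n : ℝ)) * ⟪x, gradient ψ x⟫) := fun x => by
    by_cases hx : x = 0
    · rw [hx, gradient_eq_zero_of_notMem_tsupport fun h => hs h rfl, inner_zero_right]; simp
    · rw [hflux x hx, real_inner_smul_left]; ring
  simp only [e]
  rw [integral_const_mul, N.integral_dualNorm_rpow_mul_inner hψ hc hs, mul_zero]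

theorem exists_dualNorm_rpow_bounds {γ : ℝ} (hγ : 0 < γ) :
    ∃ c C : ℝ, 0 < c ∧ 0 < C ∧ ∀ x : En n, x ≠ 0 → c * ‖x‖ ^ (-γ) ≤ N.dualNorm x ^ (-γ) ∧
      N.dualNorm x ^ (-γ) ≤ C * ‖x‖ ^ (-γ) := by
  obtain ⟨c, C, hc, hC, hN⟩ := N.exists_dualNorm_equiv
  refine ⟨C ^ (-γ), c ^ (-γ), by positivity, by positivity, fun x hx => ?_⟩
  have hx' := norm_pos_iff.2 hx
  rw [← Real.mul_rpow hC.le hx'.le, ← Real.mul_rpow hc.le hx'.le]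
  exact ⟨Real.rpow_le_rpow_of_nonpos (N.dualNorm_pos hx) (hN x).2 (by linarith),
    Real.rpow_le_rpow_of_nonpos (by positivity) (hN x).1 (by linarith)⟩

end MinkowskiNorm

/-- Two-sided power bounds at infinity for positive `p`-harmonic functions vanishing at
infinity. -/
theorem IsPHarmonicOn.exists_rpow_bounds {n : ℕ} {N : MinkowskiNorm n} {p : ℝ} {U : Set (En n)}
    {v : En n → ℝ} (hp : 1 < p) (hpn : p < n) (hU : IsOpen U) {R : ℝ}
    (hR0 : 0 < R) (hR : ∀ x : En n, R ≤ ‖x‖ → x ∈ U) (h : IsPHarmonicOn N p U v)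
    (hpos : ∀ x ∈ U, 0 < v x) (hlim : Tendsto v (cocompact (En n)) (𝓝 0)) :
    ∃ γ c C : ℝ, 0 < γ ∧ 0 < c ∧ 0 < C ∧ ∀ x : En n, R ≤ ‖x‖ →
      c * ‖x‖ ^ (-γ) ≤ v x ∧ v x ≤ C * ‖x‖ ^ (-γ) := by
  have hn : 0 < n := by
    have : (0 : ℝ) < n := by linarith
    exact_mod_cast this
  have hγ : 0 < (n - p) / (p - 1) := div_pos (by linarith) (by linarith)
  set γ : ℝ := (n - p) / (p - 1) with hγdef
  obtain ⟨a, b, ha, hb, hab⟩ := N.exists_dualNorm_rpow_bounds hγ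
  set Γ : En n → ℝ := fun x => N.dualNorm x ^ (-γ) with hΓ
  have hΓh : IsPHarmonicOn N p {0}ᶜ Γ := N.isPHarmonicOn_dualNorm_rpow hp hpn
  have hRne : ∀ x : En n, R ≤ ‖x‖ → x ≠ 0 := fun x hx => norm_pos_iff.1 (hR0.trans_le hx)
  have hΓlim : Tendsto Γ (cocompact (En n)) (𝓝 0) := by
    have h1 : Tendsto (fun x : En n => b * ‖x‖ ^ (-γ)) (cocompact (En n)) (𝓝 0) := by
      simpa using ((tendsto_rpow_neg_atTop hγ).comp tendsto_norm_cocompact_atTop).const_mul b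
    have hev : ∀ᶠ x : En n in cocompact (En n), R ≤ ‖x‖ :=
      tendsto_norm_cocompact_atTop.eventually_ge_atTop R
    refine squeeze_zero' ?_ ?_ h1
    · filter_upwards [hev] with x hx
      exact (Real.rpow_pos_of_pos (N.dualNorm_pos (hRne x hx)) _).le
    · filter_upwards [hev] with x hx
      exact (hab x (hRne x hx)).2
  set S : Set (En n) := {x : En n | R ≤ ‖x‖ ∧ ‖x‖ ≤ R} with hS
  have hSc : IsCompact S := isCompact_annulus _ _
  have hSU : S ⊆ U := fun x hx => hR x hx.1
  have hSne : S.Nonempty := by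
    have : Nontrivial (En n) := by
      have : Nonempty (Fin n) := ⟨⟨0, hn⟩⟩
      infer_instance
    obtain ⟨x, hx⟩ := (NormedSpace.sphere_nonempty (E := En n) (x := 0) (r := R)).2 hR0.le
    have hx' : ‖x‖ = R := by simpa using hx
    exact ⟨x, hx'.ge, hx'.le⟩
  obtain ⟨x₀, hx₀, hmin⟩ := hSc.exists_isMinOn hSne (h.1.continuousOn.mono hSU)
  obtain ⟨x₁, hx₁, hmax⟩ := hSc.exists_isMaxOn hSne (h.1.continuousOn.mono hSU)
  have hm := hpos x₀ (hSU hx₀)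
  have hM := hpos x₁ (hSU hx₁)
  have hRγ : 0 < R ^ (-γ) := Real.rpow_pos_of_pos hR0 _
  set m := v x₀ / (b * R ^ (-γ)) with hmdef
  set M := v x₁ / (a * R ^ (-γ)) with hMdef
  have hm0 : 0 < m := by positivity
  have hM0 : 0 < M := by positivity
  have hW : IsOpen (U ∩ {0}ᶜ) := hU.inter isOpen_compl_singleton
  have hRW : ∀ x : En n, R ≤ ‖x‖ → x ∈ U ∩ {0}ᶜ := fun x hx => ⟨hR x hx, hRne x hx⟩
  have hlow : ∀ x : En n, R ≤ ‖x‖ → m * Γ x ≤ v x := fun x hx => by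
    refine ((hΓh.const_mul hm0).mono inter_subset_right).le_of_le_sphere hn hp hW hRW
      (h.mono inter_subset_left) (fun y hy => ?_) (fun ε hε => ?_) hx
    · have h1 := (hab y (hRne y hy.ge)).2
      rw [hy] at h1
      calc m * Γ y ≤ m * (b * R ^ (-γ)) := by gcongr
        _ = v x₀ := by rw [hmdef]; field_simp
        _ ≤ v y := hmin ⟨hy.ge, hy.le⟩
    · have t := (hΓlim.const_mul m).sub hlim
      simp only [mul_zero, sub_zero] at t
      exact t.eventually (gt_mem_nhds hε)
  have hup : ∀ x : En n, R ≤ ‖x‖ → v x ≤ M * Γ x := fun x hx => by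
    refine (h.mono inter_subset_left).le_of_le_sphere hn hp hW hRW
      ((hΓh.const_mul hM0).mono inter_subset_right) (fun y hy => ?_) (fun ε hε => ?_) hx
    · have h1 := (hab y (hRne y hy.ge)).1
      rw [hy] at h1
      calc v y ≤ v x₁ := hmax ⟨hy.ge, hy.le⟩
        _ = M * (a * R ^ (-γ)) := by rw [hMdef]; field_simp
        _ ≤ M * Γ y := by gcongr
    · have t := hlim.sub (hΓlim.const_mul M)
      simp only [mul_zero, sub_zero] at t
      exact t.eventually (gt_mem_nhds hε)
  refine ⟨γ, m * a, M * b, hγ, by positivity, by positivity, fun x hx => ⟨?_, ?_⟩⟩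
  · refine le_trans ?_ (hlow x hx)
    rw [mul_assoc]
    exact mul_le_mul_of_nonneg_left (hab x (hRne x hx)).1 hm0.le
  · refine (hup x hx).trans ?_
    rw [mul_assoc]
    exact mul_le_mul_of_nonneg_left (hab x (hRne x hx)).2 hM0.le

/-- Harnack inequality at infinity. -/
theorem IsPHarmonicOn.exists_harnack {n : ℕ} {N : MinkowskiNorm n} {p : ℝ} {U : Set (En n)}
    {v : En n → ℝ} (hp : 1 < p) (hpn : p < n) (hU : IsOpen U) {R : ℝ}
    (hR0 : 0 < R) (hR : ∀ x : En n, R ≤ ‖x‖ → x ∈ U) (h : IsPHarmonicOn N p U v)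
    (hpos : ∀ x ∈ U, 0 < v x) (hlim : Tendsto v (cocompact (En n)) (𝓝 0)) :
    ∃ K : ℝ, 0 < K ∧ ∀ x y : En n, R ≤ ‖x‖ → R ≤ ‖y‖ → ‖x‖ / 2 ≤ ‖y‖ → v y ≤ K * v x := by
  obtain ⟨γ, c, C, hγ, hc, hC, hb⟩ := h.exists_rpow_bounds hp hpn hU hR0 hR hpos hlim
  refine ⟨C * (1 / 2) ^ (-γ) / c, by positivity, fun x y hx hy hxy => ?_⟩
  have hx0 : 0 < ‖x‖ := hR0.trans_le hx
  calc v y ≤ C * ‖y‖ ^ (-γ) := (hb y hy).2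
    _ ≤ C * (1 / 2 * ‖x‖) ^ (-γ) := by
        have := Real.rpow_le_rpow_of_nonpos (x := 1 / 2 * ‖x‖) (y := ‖y‖) (z := -γ)
          (by positivity) (by linarith) (by linarith)
        gcongr
    _ = C * (1 / 2) ^ (-γ) / c * (c * ‖x‖ ^ (-γ)) := by
        rw [Real.mul_rpow (by norm_num) hx0.le]; field_simp
    _ ≤ _ := by
        have := (hb x hx).1
        gcongr

/-! ### Energy estimate -/

section Energy

variable {n : ℕ} {N : MinkowskiNorm n} {p : ℝ}

theorem hasFDerivAt_const_mul_norm_sq (a : ℝ) (x : En n) :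
    HasFDerivAt (fun y : En n => a * ‖y‖ ^ 2) ((2 * a) • innerSL ℝ x) x := by
  have h := (hasStrictFDerivAt_norm_sq x).hasFDerivAt.const_mul a
  have e : (2 * a) • innerSL ℝ x = a • (2 : ℕ) • innerSL ℝ x := by
    ext w
    simp
    ring
  rw [e]
  exact h

theorem contDiff_const_mul_norm_sq (a : ℝ) : ContDiff ℝ 1 fun y : En n => a * ‖y‖ ^ 2 :=
  contDiff_const.mul (contDiff_norm_sq ℝ)

theorem exists_volume_gradient_ge_le (N : MinkowskiNorm n) (hp : 1 < p) {K L κ : ℝ} (hK : 0 < K)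
    (hκ : 0 < κ) :
    ∃ C : ℝ, 0 < C ∧ ∀ R : ℝ, 0 < R → ∀ V : En n → ℝ, IsPHarmonicOn N p (ball 0 (3 * R)) V →
      (∀ x ∈ ball (0 : En n) (3 * R), |V x| ≤ K) →
      (∀ x ∈ ball (0 : En n) (3 * R), ‖gradient V x‖ ≤ L) →
      volume.real (closedBall (0 : En n) R ∩ {x | κ ≤ ‖gradient V x‖}) ≤ C * (R ^ n / R) := by
  obtain ⟨c, _, hc, _, hN⟩ := N.exists_norm_equiv
  obtain ⟨Λ₀, hΛ₀⟩ := (isCompact_closedBall (0 : En n) L).exists_bound_of_continuousOn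
    (N.continuous_flux hp).continuousOn
  set Λ := |Λ₀| + 1 with hΛ
  have hΛpos : 0 < Λ := by positivity
  have hflux : ∀ ξ : En n, ‖ξ‖ ≤ L → ‖N.flux p ξ‖ ≤ Λ := fun ξ hξ =>
    (hΛ₀ ξ (by simpa using hξ)).trans (by rw [hΛ]; linarith [le_abs_self Λ₀])
  set m := (c * κ) ^ p with hm
  have hmpos : 0 < m := by positivity
  set ω := volume.real (ball (0 : En n) 1) with hω
  refine ⟨16 * K * Λ / m * (2 ^ n * ω) + 1, by positivity, fun R hR V hV hVK hVL => ?_⟩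
  set U := ball (0 : En n) (3 * R) with hU
  have hUo : IsOpen U := isOpen_ball
  set B := closedBall (0 : En n) (2 * R) with hB
  have hBc : IsCompact B := isCompact_closedBall _ _
  have hBU : B ⊆ U := closedBall_subset_ball (by linarith)
  set b := 1 / R ^ 2 with hb
  set ζ : En n → ℝ := fun x => 4 - b * ‖x‖ ^ 2 with hζ
  have hζd : ContDiff ℝ 1 ζ := contDiff_const.sub (contDiff_const_mul_norm_sq b)
  set g : En n → ℝ := fun x => ζ x * (V x + 2 * K) with hg
  have hgd : ContDiffOn ℝ 1 g U := hζd.contDiffOn.mul (hV.1.add contDiffOn_const)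
  have hζB : ∀ x ∈ B, 0 ≤ ζ x := fun x hx => by
    have hx : ‖x‖ ≤ 2 * R := by simpa [hB] using hx
    have : ‖x‖ ^ 2 ≤ (2 * R) ^ 2 := pow_le_pow_left₀ (norm_nonneg _) hx 2
    simp only [hζ, hb]
    rw [div_mul_eq_mul_div, sub_nonneg, div_le_iff₀ (by positivity)]
    nlinarith
  have hVpos : ∀ x ∈ U, K ≤ V x + 2 * K ∧ V x + 2 * K ≤ 3 * K := fun x hx => by
    have := abs_le.1 (hVK x hx)
    constructor <;> linarith
  have hgB : ∀ x ∈ U, x ∉ B → g x ≤ 0 := fun x hx hxB => by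
    have hxB : 2 * R < ‖x‖ := by simpa [hB] using hxB
    have : (2 * R) ^ 2 ≤ ‖x‖ ^ 2 := pow_le_pow_left₀ (by positivity) hxB.le 2
    refine mul_nonpos_of_nonpos_of_nonneg ?_ (by linarith [hVpos x hx])
    simp only [hζ, hb]
    rw [div_mul_eq_mul_div, sub_nonpos, le_div_iff₀ (by positivity)]
    nlinarith
  obtain ⟨hfi, hf0⟩ := hV.setIntegral_truncSq hp hUo hgd hBc hBU hgB
  set f : En n → ℝ := fun x => max (g x) 0 * ⟪N.flux p (gradient V x), gradient g x⟫ with hf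
  set E := closedBall (0 : En n) R ∩ {x | κ ≤ ‖gradient V x‖} with hE
  have hRB : closedBall (0 : En n) R ⊆ B := closedBall_subset_closedBall (by linarith)
  have hEB : E ⊆ B := inter_subset_left.trans hRB
  have hEc : IsClosed E :=
    ((hV.1.continuousOn_gradient hUo).norm.mono (hRB.trans hBU)).preimage_isClosed_of_isClosed
      isClosed_closedBall isClosed_Ici
  have hpt : ∀ x ∈ B, E.indicator (fun _ => 9 * K * m) x - 144 * K ^ 2 * Λ / R ≤ f x := by
    intro x hx
    have hxU := hBU hx
    have hVd := (hV.1.contDiffAt (hUo.mem_nhds hxU)).differentiableAt (by simp)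
    have hgrad : ∀ w, ⟪w, gradient g x⟫ =
        ζ x * ⟪w, gradient V x⟫ - (V x + 2 * K) * (2 * b * ⟪w, x⟫) := fun w => by
      have h1 : fderiv ℝ g x = _ := (((hasFDerivAt_const_mul_norm_sq b x).const_sub 4).mul
        (hVd.hasFDerivAt.add_const (2 * K))).fderiv
      rw [real_inner_comm, inner_gradient, h1]
      simp only [_root_.add_apply, _root_.smul_apply, _root_.neg_apply, innerSL_apply_apply,
        smul_eq_mul]
      rw [← inner_gradient, real_inner_comm w, real_inner_comm w x]
      ring
    have hζx := hζB x hx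
    have hζ4 : ζ x ≤ 4 := by simp only [hζ]; rw [sub_le_self_iff]; positivity
    obtain ⟨hV1, hV2⟩ := hVpos x hxU
    have hgx : 0 ≤ g x := mul_nonneg hζx (by linarith)
    have hxn : ‖x‖ ≤ 2 * R := by simpa [hB] using hx
    set W := V x + 2 * K with hW
    have hfx : f x = ζ x ^ 2 * W * N.F (gradient V x) ^ p -
        ζ x * W ^ 2 * (2 * b * ⟪N.flux p (gradient V x), x⟫) := by
      simp only [hf]
      rw [max_eq_left hgx, hgrad, N.inner_flux_self hp]
      simp only [hg]
      rw [← hW]; ring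
    have hcs : b * ⟪N.flux p (gradient V x), x⟫ ≤ 2 * Λ / R := by
      have h1 := real_inner_le_norm (N.flux p (gradient V x)) x
      have h2 := hflux _ (hVL x hxU)
      calc b * ⟪N.flux p (gradient V x), x⟫ ≤ b * (Λ * (2 * R)) := by
            have : 0 ≤ b := by positivity
            gcongr
            exact h1.trans (mul_le_mul h2 hxn (norm_nonneg _) hΛpos.le)
        _ = _ := by rw [hb]; field_simp
    have hsecond : ζ x * W ^ 2 * (2 * b * ⟪N.flux p (gradient V x), x⟫) ≤
        144 * K ^ 2 * Λ / R := by
      have hA : ζ x * W ^ 2 ≤ 4 * (3 * K) ^ 2 := by gcongr; linarith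
      have hA0 : 0 ≤ ζ x * W ^ 2 := by positivity
      calc ζ x * W ^ 2 * (2 * b * ⟪N.flux p (gradient V x), x⟫)
          = ζ x * W ^ 2 * (2 * (b * ⟪N.flux p (gradient V x), x⟫)) := by ring
        _ ≤ ζ x * W ^ 2 * (2 * (2 * Λ / R)) := by gcongr
        _ ≤ 4 * (3 * K) ^ 2 * (2 * (2 * Λ / R)) := by gcongr
        _ = _ := by ring
    have hFp : 0 ≤ N.F (gradient V x) ^ p := Real.rpow_nonneg (N.nonneg _) _
    have hfirst : E.indicator (fun _ => 9 * K * m) x ≤ ζ x ^ 2 * W * N.F (gradient V x) ^ p := by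
      by_cases hxE : x ∈ E
      · rw [indicator_of_mem hxE]
        have hκx : κ ≤ ‖gradient V x‖ := hxE.2
        have hxR : ‖x‖ ≤ R := by simpa using hxE.1
        have h3 : 3 ≤ ζ x := by
          have : ‖x‖ ^ 2 ≤ R ^ 2 := pow_le_pow_left₀ (norm_nonneg _) hxR 2
          have : b * ‖x‖ ^ 2 ≤ 1 := by
            rw [hb, div_mul_eq_mul_div, div_le_one (by positivity)]; linarith
          simp only [hζ]; linarith
        have h4 : m ≤ N.F (gradient V x) ^ p := by
          refine Real.rpow_le_rpow (by positivity) ?_ (by linarith)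
          exact le_trans (by gcongr) (hN _).1
        have h9 : (9 : ℝ) ≤ ζ x ^ 2 := by nlinarith
        have : 0 ≤ W := by linarith
        gcongr
      · rw [indicator_of_notMem hxE]
        have : 0 ≤ W := by linarith
        positivity
    rw [hfx]; linarith
  have hBfin : volume B ≠ ⊤ := hBc.measure_lt_top.ne
  have hind : IntegrableOn (E.indicator fun _ => 9 * K * m) B :=
    (integrableOn_const hBfin).indicator hEc.measurableSet
  have hcon : IntegrableOn (fun _ : En n => 144 * K ^ 2 * Λ / R) B := integrableOn_const hBfin
  have hmono := setIntegral_mono_on (hind.sub hcon) hfi hBc.isClosed.measurableSet hpt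
  rw [hf0, integral_sub' hind hcon, setIntegral_indicator hEc.measurableSet,
    inter_eq_right.2 hEB, setIntegral_const, setIntegral_const, smul_eq_mul, smul_eq_mul] at hmono
  have hvolB : volume.real B = (2 * R) ^ n * ω := by
    rw [hB, Measure.addHaar_real_closedBall _ _ (by positivity)]
    simp [hω]
  rw [hvolB] at hmono
  have hle : volume.real E ≤ 16 * K * Λ / m * (2 ^ n * ω) * (R ^ n / R) := by
    have h1 : volume.real E * (9 * K * m) ≤ (2 * R) ^ n * ω * (144 * K ^ 2 * Λ / R) := by linarith
    rw [← le_div_iff₀ (by positivity)] at h1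
    refine h1.trans (le_of_eq ?_)
    rw [mul_pow]; field_simp; ring
  refine hle.trans ?_
  gcongr
  linarith

end Energy

/-! ### Sobolev inequality on level sets and iteration -/

section Iteration

/-- A weak-type form of the Gagliardo–Nirenberg–Sobolev inequality. -/
theorem exists_mul_volume_rpow_le {n : ℕ} (hn : 2 ≤ n) :
    ∃ C : ℝ, 0 < C ∧ ∀ ψ : En n → ℝ, ContDiff ℝ 1 ψ → HasCompactSupport ψ → ∀ δ : ℝ, 0 < δ →
      δ * volume.real {x | δ ≤ ψ x} ^ (1 - 1 / (n : ℝ)) ≤ C * ∫ x, ‖gradient ψ x‖ := by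
  have hn' : (2 : ℝ) ≤ n := by exact_mod_cast hn
  set q : ℝ := (1 - 1 / (n : ℝ))⁻¹ with hq
  have hθ : 0 < 1 - 1 / (n : ℝ) := by
    rw [sub_pos, div_lt_one (by linarith)]; linarith
  have hq0 : 0 < q := inv_pos.2 hθ
  have hconj : Real.HolderConjugate (Module.finrank ℝ (En n)) q := by
    rw [finrank_euclideanSpace_fin, Real.holderConjugate_iff]
    refine ⟨by linarith, ?_⟩
    rw [hq, inv_inv]; ring
  set C₀ := lintegralPowLePowLIntegralFDerivConst (volume : Measure (En n)) q with hC₀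
  refine ⟨(C₀ : ℝ) ^ (1 - 1 / (n : ℝ)) + 1, by positivity, fun ψ hψ hc δ hδ => ?_⟩
  have hgns := lintegral_pow_le_pow_lintegral_fderiv volume hψ hc hconj
  set I := ∫ x, ‖gradient ψ x‖ with hI
  have hI0 : 0 ≤ I := integral_nonneg fun x => norm_nonneg _
  have hIe : ∫⁻ x, ‖fderiv ℝ ψ x‖ₑ = ENNReal.ofReal I := by
    have hcont : Continuous (fderiv ℝ ψ) := hψ.continuous_fderiv (by simp)
    have hInt : Integrable (fderiv ℝ ψ) := hcont.integrable_of_hasCompactSupport (hc.fderiv ℝ)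
    simp only [hI, norm_gradient]
    rw [ofReal_integral_norm_eq_lintegral_enorm hInt]
  have hsub : {x | δ ≤ ψ x} ⊆ tsupport ψ := fun x hx => subset_tsupport _ (by
    have : 0 < ψ x := hδ.trans_le hx
    exact this.ne')
  have hfin : volume {x | δ ≤ ψ x} ≠ ⊤ := (measure_mono_top hsub).mt hc.isCompact.measure_lt_top.ne
  have hcheb : ENNReal.ofReal (δ ^ q) * volume {x | δ ≤ ψ x} ≤ ∫⁻ x, ‖ψ x‖ₑ ^ q := by
    refine le_trans ?_ (mul_meas_ge_le_lintegral
      ((hψ.continuous.measurable.enorm).pow_const q) (ENNReal.ofReal (δ ^ q)))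
    refine mul_le_mul' le_rfl (measure_mono fun x hx => ?_)
    change ENNReal.ofReal (δ ^ q) ≤ ‖ψ x‖ₑ ^ q
    have hx : δ ≤ ψ x := hx
    rw [← ENNReal.ofReal_rpow_of_pos hδ]
    gcongr
    rw [Real.enorm_eq_ofReal_abs]
    exact ENNReal.ofReal_le_ofReal (le_trans hx (le_abs_self _))
  have h1 := hcheb.trans hgns
  rw [hIe, ENNReal.ofReal_rpow_of_nonneg hI0 hq0.le] at h1
  have h2 : δ ^ q * volume.real {x | δ ≤ ψ x} ≤ C₀ * I ^ q := by
    have := ENNReal.toReal_mono (by finiteness) h1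
    rwa [ENNReal.toReal_mul, ENNReal.toReal_mul, ENNReal.toReal_ofReal (by positivity),
      ENNReal.toReal_ofReal (by positivity), ENNReal.coe_toReal] at this
  have h3 := Real.rpow_le_rpow (by positivity) h2 hθ.le
  rw [Real.mul_rpow (by positivity) measureReal_nonneg, Real.mul_rpow (by positivity) (by positivity),
    ← Real.rpow_mul hδ.le, ← Real.rpow_mul hI0, hq, inv_mul_cancel₀ hθ.ne', Real.rpow_one,
    Real.rpow_one] at h3
  refine h3.trans ?_
  gcongr
  linarith

/-- De Giorgi–Stampacchia iteration. -/
theorem stampacchia_iteration {a : ℝ → ℝ} (ha : Antitone a) (ha0 : ∀ k, 0 ≤ a k) {θ M κ : ℝ}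
    (hθ0 : 0 < θ) (hθ1 : θ < 1) (hκ : 0 < κ) (hM : 0 ≤ M)
    (h : ∀ k l, 0 ≤ k → k < l → (l - k) ^ 2 * a l ^ θ ≤ M * a k)
    (hsmall : 4 * M * a 0 ^ (1 - θ) ≤ κ ^ 2 * ((1 / 4 : ℝ) ^ (1 / (1 - θ))) ^ θ) : a κ = 0 := by
  set r : ℝ := (1 / 4 : ℝ) ^ (1 / (1 - θ)) with hr
  have hθ' : 0 < 1 - θ := by linarith
  have hr0 : 0 < r := by positivity
  have hr1 : r < 1 := Real.rpow_lt_one (by norm_num) (by norm_num) (by positivity)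
  have hrθ : r = r ^ θ * (1 / 4) := by
    have : r ^ (1 - θ) = 1 / 4 := by
      rw [hr, ← Real.rpow_mul (by norm_num), one_div_mul_cancel hθ'.ne', Real.rpow_one]
    rw [← this, ← Real.rpow_add hr0, add_sub_cancel, Real.rpow_one]
  set k : ℕ → ℝ := fun j => κ * (1 - (1 / 2) ^ j) with hk
  have hstep : ∀ j, a (k j) ≤ a 0 * r ^ j := by
    intro j
    induction j with
    | zero => simp [hk]
    | succ j ih =>
      have hkj : 0 ≤ k j := by
        have : (1 / 2 : ℝ) ^ j ≤ 1 := pow_le_one₀ (by norm_num) (by norm_num)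
        exact mul_nonneg hκ.le (by linarith)
      have hd : k (j + 1) - k j = κ * (1 / 2) ^ (j + 1) := by
        simp only [hk]; rw [pow_succ]; ring
      have h1 := h (k j) (k (j + 1)) hkj (by
        have : 0 < κ * (1 / 2 : ℝ) ^ (j + 1) := by positivity
        linarith)
      rw [hd] at h1
      have e4 : (κ * (1 / 2 : ℝ) ^ (j + 1)) ^ 2 = κ ^ 2 * (1 / 4) ^ j * (1 / 4) := by
        rw [mul_pow, ← pow_mul, mul_comm (j + 1) 2, pow_mul, pow_succ]; norm_num; ring
      rw [e4] at h1
      have ha00 := ha0 0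
      have hsplit : a 0 = a 0 ^ (1 - θ) * a 0 ^ θ := by
        rcases ha00.eq_or_lt with h0 | h0
        · rw [← h0, Real.zero_rpow hθ0.ne', mul_zero]
        · rw [← Real.rpow_add h0, sub_add_cancel, Real.rpow_one]
      have h2 : κ ^ 2 * (1 / 4) ^ j * a (k (j + 1)) ^ θ ≤
          κ ^ 2 * (1 / 4) ^ j * (a 0 * r ^ (j + 1)) ^ θ := by
        calc κ ^ 2 * (1 / 4) ^ j * a (k (j + 1)) ^ θ
            = 4 * (κ ^ 2 * (1 / 4) ^ j * (1 / 4) * a (k (j + 1)) ^ θ) := by ring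
          _ ≤ 4 * (M * a (k j)) := by gcongr
          _ ≤ 4 * (M * (a 0 * r ^ j)) := by gcongr
          _ = (4 * M * a 0 ^ (1 - θ)) * (a 0 ^ θ * r ^ j) := by
              conv_lhs => rw [hsplit]
              ring
          _ ≤ (κ ^ 2 * r ^ θ) * (a 0 ^ θ * r ^ j) := by gcongr
          _ = κ ^ 2 * (1 / 4) ^ j * (a 0 * r ^ (j + 1)) ^ θ := by
              rw [Real.mul_rpow ha00 (by positivity), ← Real.rpow_natCast_mul hr0.le,
                mul_comm ((j + 1 : ℕ) : ℝ) θ, Real.rpow_mul_natCast hr0.le]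
              conv_lhs => rw [hrθ, mul_pow, ← hrθ]
              ring
      have h3 : a (k (j + 1)) ^ θ ≤ (a 0 * r ^ (j + 1)) ^ θ :=
        le_of_mul_le_mul_left h2 (by positivity)
      exact (Real.rpow_le_rpow_iff (ha0 _) (by positivity) hθ0).1 h3
  have hlim : Tendsto (fun j : ℕ => a 0 * r ^ j) atTop (𝓝 0) := by
    simpa using (tendsto_pow_atTop_nhds_zero_of_lt_one hr0.le hr1).const_mul (a 0)
  refine le_antisymm (ge_of_tendsto' hlim fun j => le_trans (ha ?_) (hstep j)) (ha0 κ)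
  have : 0 < (1 / 2 : ℝ) ^ j := by positivity
  simp only [hk]; nlinarith

end Iteration

/-! ### Level sets of difference quotients -/

section DifferenceQuotient

variable {n : ℕ} {N : MinkowskiNorm n} {p : ℝ}

/-- The difference quotient of `V` in direction `e`, minus a quadratic barrier. -/
def quotientBarrier (V : En n → ℝ) (e : En n) (s κ b : ℝ) (x : En n) : ℝ :=
  (V (x + s • e) - V x) / s - κ - b * ‖x‖ ^ 2

/-- The superlevel sets of the difference quotient with barrier. -/
def quotientLevel (V : En n → ℝ) (e : En n) (s κ b r k : ℝ) : Set (En n) :=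
  ball 0 r ∩ quotientBarrier V e s κ b ⁻¹' Ioi k

theorem exists_quotientLevel_bound (N : MinkowskiNorm n) (hn : 2 ≤ n) (hp : 1 < p) {L κ : ℝ}
    (hL : 0 < L) (hκ : 0 < κ) :
    ∃ C : ℝ, 0 < C ∧ ∀ R : ℝ, 0 < R → ∀ V : En n → ℝ, IsPHarmonicOn N p (ball 0 (3 * R)) V →
      (∀ x ∈ ball (0 : En n) (3 * R), ‖gradient V x‖ ≤ L) → ∀ (e : En n) (s : ℝ), ‖e‖ = 1 → 0 < s →
      s ≤ R → (∀ x ∈ closedBall (0 : En n) R, ∀ y, ‖y - x‖ ≤ s →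
        ‖gradient V y - gradient V x‖ ≤ κ / 4) →
      (∀ k, IsOpen (quotientLevel V e s κ (L / R ^ 2) (2 * R) k)) ∧
      (∀ k, 0 ≤ k → quotientLevel V e s κ (L / R ^ 2) (2 * R) k ⊆
        closedBall 0 R ∩ {x | κ / 2 ≤ ‖gradient V x‖}) ∧
      ∀ k l, 0 ≤ k → k < l →
        (l - k) ^ 2 * volume.real (quotientLevel V e s κ (L / R ^ 2) (2 * R) l) ^
            (1 - 1 / (n : ℝ)) ≤
          C / R * volume.real (quotientLevel V e s κ (L / R ^ 2) (2 * R) k) := by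
  obtain ⟨CS, hCS, hsob⟩ := exists_mul_volume_rpow_le hn
  obtain ⟨lam, Lam, hlam, hLam, hbounds⟩ := N.exists_flux_bounds hp (r := κ / 2) (R := L)
    (half_pos hκ)
  refine ⟨CS * (2 * (2 * L * (Lam / lam + 1)) * L), by positivity,
    fun R hR V hV hVL e s he hs hsR hunif => ?_⟩
  set b := L / R ^ 2 with hb
  have hb0 : 0 < b := by positivity
  set U := ball (0 : En n) (2 * R) with hU
  have hUo : IsOpen U := isOpen_ball
  set U₃ := ball (0 : En n) (3 * R) with hU₃
  have hU₃o : IsOpen U₃ := isOpen_ball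
  have hUU₃ : U ⊆ U₃ := ball_subset_ball (by linarith)
  have hshift : ∀ x ∈ U, ∀ y, ‖y - x‖ ≤ s → y ∈ U₃ := fun x hx y hy => by
    have hx : ‖x‖ < 2 * R := by simpa [hU] using hx
    have : ‖y‖ ≤ ‖y - x‖ + ‖x‖ := by simpa using norm_add_le (y - x) x
    simp only [hU₃, mem_ball_zero_iff]; linarith
  have hse : ‖s • e‖ = s := by rw [norm_smul, he, mul_one, Real.norm_of_nonneg hs.le]
  have hshift' : ∀ x ∈ U, x + s • e ∈ U₃ := fun x hx =>
    hshift x hx _ (by rw [add_sub_cancel_left, hse])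
  set B := closedBall (0 : En n) R with hB
  have hBc : IsCompact B := isCompact_closedBall _ _
  have hBU : B ⊆ U := closedBall_subset_ball (by linarith)
  have hVs : IsPHarmonicOn N p U fun x => V (x + s • e) := (hV.comp_add_right _).mono hshift'
  have hVU : IsPHarmonicOn N p U V := hV.mono hUU₃
  have hdV : ∀ x ∈ U₃, DifferentiableAt ℝ V x := fun x hx =>
    (hV.1.contDiffAt (hU₃o.mem_nhds hx)).differentiableAt (by simp)
  set z := quotientBarrier V e s κ b with hz
  have hzd : ContDiffOn ℝ 1 z U :=
    (((hVs.1.sub hVU.1).div_const s).sub contDiffOn_const).sub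
      (contDiff_const_mul_norm_sq b).contDiffOn
  have hquot : ∀ x ∈ U, (V (x + s • e) - V x) / s ≤ L := fun x hx => by
    rw [div_le_iff₀ hs]
    have := abs_sub_le_of_norm_gradient_le (convex_ball (0 : En n) (3 * R)) hdV hVL (hUU₃ hx)
      (hshift' x hx)
    rw [add_sub_cancel_left, hse] at this
    exact (le_abs_self _).trans this
  have hzL : ∀ x ∈ U, z x ≤ L := fun x hx => by
    have h1 := hquot x hx
    have h2 : 0 ≤ b * ‖x‖ ^ 2 := by positivity
    simp only [hz, quotientBarrier]; linarith
  have hzB : ∀ x ∈ U, x ∉ B → z x ≤ 0 := fun x hx hxB => by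
    have hxB : R < ‖x‖ := by simpa [hB] using hxB
    have h1 := hquot x hx
    have h2 : L ≤ b * ‖x‖ ^ 2 := by
      have : R ^ 2 ≤ ‖x‖ ^ 2 := pow_le_pow_left₀ hR.le hxB.le 2
      rw [hb, div_mul_eq_mul_div, le_div_iff₀ (by positivity)]
      gcongr
    simp only [hz, quotientBarrier]; linarith
  have hdir : ∀ x ∈ U, 0 < z x → κ / 2 ≤ ⟪gradient V x, e⟫ ∧
      κ / 2 ≤ ⟪gradient V (x + s • e), e⟫ := fun x hx hzx => by
    have hxB : x ∈ B := by_contra fun h => absurd (hzB x hx h) (not_le.2 hzx)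
    have hq : κ < (V (x + s • e) - V x) / s := by
      have h2 : 0 ≤ b * ‖x‖ ^ 2 := by positivity
      simp only [hz, quotientBarrier] at hzx; linarith
    rw [lt_div_iff₀ hs] at hq
    have hm := (convex_closedBall x s).norm_image_sub_le_of_norm_fderiv_le'
      (f := V) (φ := fderiv ℝ V x) (C := κ / 4) (x := x) (y := x + s • e)
      (fun y hy => hdV y (hshift x hx y (by rw [← dist_eq_norm]; exact hy)))
      (fun y hy => by
        rw [← norm_gradient_sub]
        exact hunif x hxB y (by rw [← dist_eq_norm]; exact hy))
      (by simp [hs.le]) (by simp [norm_smul, he, abs_of_pos hs])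
    rw [add_sub_cancel_left, hse, map_smul, ← inner_gradient, smul_eq_mul, Real.norm_eq_abs] at hm
    have hm := (le_abs_self _).trans hm
    have h1 : 3 * κ / 4 ≤ ⟪gradient V x, e⟫ := by
      refine le_of_mul_le_mul_left ?_ hs
      linarith
    have h2 : |⟪gradient V (x + s • e) - gradient V x, e⟫| ≤ κ / 4 := by
      refine (abs_real_inner_le_norm _ _).trans ?_
      rw [he, mul_one]
      exact hunif x hxB _ (by rw [add_sub_cancel_left, hse])
    rw [inner_sub_left] at h2
    have h3 := (abs_le.1 h2).1
    constructor <;> linarith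
  have hopen : ∀ k, IsOpen (quotientLevel V e s κ b (2 * R) k) := fun k =>
    hzd.continuousOn.isOpen_inter_preimage hUo isOpen_Ioi
  have hlevB : ∀ k, 0 ≤ k → quotientLevel V e s κ b (2 * R) k ⊆ B := fun k hk x hx =>
    by_contra fun h => absurd (hzB x hx.1 h) (not_le.2 (lt_of_le_of_lt hk hx.2))
  refine ⟨hopen, fun k hk x hx => ⟨hlevB k hk hx, ?_⟩, fun k l hk hkl => ?_⟩
  · have h1 := (hdir x hx.1 (lt_of_le_of_lt hk hx.2)).1
    have h2 := real_inner_le_norm (gradient V x) e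
    rw [he, mul_one] at h2
    exact h1.trans h2
  set g : En n → ℝ := fun x => z x - k with hg
  have hgd : ContDiffOn ℝ 1 g U := hzd.sub contDiffOn_const
  have hgB : ∀ x ∈ U, x ∉ B → g x ≤ 0 := fun x hx hxB => by
    have := hzB x hx hxB
    simp only [hg]; linarith
  have hgrad : ∀ x ∈ U, gradient g x =
      s⁻¹ • (gradient V (x + s • e) - gradient V x) - (2 * b) • x := fun x hx => by
    refine gradient_eq_of_forall_inner fun w => ?_
    have h1 := (hVs.1.contDiffAt (hUo.mem_nhds hx)).differentiableAt (by simp)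
    have h2 := ((h1.hasFDerivAt.sub (hdV x (hUU₃ hx)).hasFDerivAt).mul_const s⁻¹).sub_const κ
    have h3 := (h2.sub (hasFDerivAt_const_mul_norm_sq b x)).sub_const k
    have h4 : fderiv ℝ g x = _ := h3.fderiv
    rw [h4, inner_sub_left, real_inner_smul_left, real_inner_smul_left, inner_sub_left,
      inner_gradient, inner_gradient, fderiv_comp_add_right]
    simp
  have hInt := hVs.setIntegral_truncSq_sub hp hUo hVU hgd hBc hBU hgB
  simp only [gradient_comp_add_right'] at hInt
  set c := 2 * L * Lam / R with hc
  have hc0 : 0 < c := by positivity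
  have hpt : ∀ x ∈ B, s * c * (max (g x) 0 * ‖gradient g x‖ -
      2 * L * (Lam / lam + 1) / R * max (g x) 0) ≤ max (g x) 0 *
      ⟪N.flux p (gradient V (x + s • e)) - N.flux p (gradient V x), gradient g x⟫ := by
    intro x hx
    have hxU := hBU hx
    rcases le_or_gt (g x) 0 with hgx | hgx
    · rw [max_eq_right hgx]; simp
    have hzx : 0 < z x := by simp only [hg] at hgx; linarith
    obtain ⟨d1, d2⟩ := hdir x hxU hzx
    have hxR : ‖x‖ ≤ R := by simpa [hB] using hx
    obtain ⟨k1, k2⟩ := hbounds e (gradient V (x + s • e)) (gradient V x) he.le d2 d1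
      (hVL _ (hshift' x hxU)) (hVL x (hUU₃ hxU))
    rw [max_eq_left hgx.le, hgrad x hxU]
    set D := N.flux p (gradient V (x + s • e)) - N.flux p (gradient V x) with hD
    set ω := gradient V (x + s • e) - gradient V x with hω
    set t := s⁻¹ * ‖ω‖ with ht
    have hst : ‖ω‖ = s * t := by rw [ht]; field_simp
    have ht0 : 0 ≤ t := by positivity
    have hbx : 2 * b * ‖x‖ ≤ 2 * L / R := by
      calc 2 * b * ‖x‖ ≤ 2 * b * R := by gcongr
        _ = _ := by rw [hb]; field_simp
    have hn1 : ‖s⁻¹ • ω - (2 * b) • x‖ ≤ t + 2 * L / R := by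
      refine (norm_sub_le _ _).trans ?_
      rw [norm_smul, norm_smul, Real.norm_of_nonneg (inv_nonneg.2 hs.le),
        Real.norm_of_nonneg (by positivity)]
      linarith
    have hi1 : s * lam * t ^ 2 ≤ s⁻¹ * ⟪D, ω⟫ := by
      rw [hst] at k1
      calc s * lam * t ^ 2 = s⁻¹ * (lam * (s * t) ^ 2) := by field_simp
        _ ≤ _ := by gcongr
    have hi2 : 2 * b * ⟪D, x⟫ ≤ s * c * t := by
      have h1 := real_inner_le_norm D x
      rw [hst] at k2
      calc 2 * b * ⟪D, x⟫ ≤ 2 * b * (‖D‖ * ‖x‖) := by gcongr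
        _ = ‖D‖ * (2 * b * ‖x‖) := by ring
        _ ≤ (Lam * (s * t)) * (2 * L / R) := by gcongr
        _ = _ := by rw [hc]; ring
    have hsq : c * t - c ^ 2 / lam ≤ lam * t ^ 2 - c * t := by
      have : 0 ≤ lam * (t - c / lam) ^ 2 := by positivity
      have e1 : lam * (t - c / lam) ^ 2 = lam * t ^ 2 - 2 * c * t + c ^ 2 / lam := by
        field_simp
        ring
      linarith
    have hcl : c * (2 * L * (Lam / lam + 1) / R) = c * (2 * L / R) + c ^ 2 / lam := by
      have : 2 * L * (Lam / lam + 1) / R = 2 * L / R + c / lam := by rw [hc]; field_simp; ring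
      rw [this]; ring
    rw [inner_sub_right, real_inner_smul_right, real_inner_smul_right]
    have hmain : s * c * (‖s⁻¹ • ω - (2 * b) • x‖ - 2 * L * (Lam / lam + 1) / R) ≤
        s⁻¹ * ⟪D, ω⟫ - 2 * b * ⟪D, x⟫ := by
      calc s * c * (‖s⁻¹ • ω - (2 * b) • x‖ - 2 * L * (Lam / lam + 1) / R)
          ≤ s * c * (t + 2 * L / R - 2 * L * (Lam / lam + 1) / R) := by gcongr
        _ = s * (c * t + c * (2 * L / R) - c * (2 * L * (Lam / lam + 1) / R)) := by ring
        _ = s * (c * t - c ^ 2 / lam) := by rw [hcl]; ring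
        _ ≤ s * (lam * t ^ 2 - c * t) := by gcongr
        _ = s * lam * t ^ 2 - s * c * t := by ring
        _ ≤ _ := by linarith
    calc s * c * (g x * ‖s⁻¹ • ω - (2 * b) • x‖ - 2 * L * (Lam / lam + 1) / R * g x)
        = g x * (s * c * (‖s⁻¹ • ω - (2 * b) • x‖ - 2 * L * (Lam / lam + 1) / R)) := by ring
      _ ≤ _ := by gcongr
  have hgc : ContinuousOn (fun x => max (g x) 0) B :=
    (continuous_id.max continuous_const).comp_continuousOn (hgd.continuousOn.mono hBU)
  have hggc : ContinuousOn (gradient g) B := (hgd.continuousOn_gradient hUo).mono hBU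
  have I1 : IntegrableOn (fun x => max (g x) 0 * ‖gradient g x‖) B :=
    (hgc.mul hggc.norm).integrableOn_compact hBc
  have I2 : IntegrableOn (fun x => 2 * L * (Lam / lam + 1) / R * max (g x) 0) B :=
    (continuousOn_const.mul hgc).integrableOn_compact hBc
  have I3 : IntegrableOn (fun x => max (g x) 0 *
      ⟪N.flux p (gradient V (x + s • e)) - N.flux p (gradient V x), gradient g x⟫) B := by
    refine (hgc.mul (ContinuousOn.inner ?_ hggc)).integrableOn_compact hBc
    have h1 := continuousOn_flux_gradient (N := N) hp hUo hVs.1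
    simp only [gradient_comp_add_right'] at h1
    exact (h1.sub (continuousOn_flux_gradient hp hUo hVU.1)).mono hBU
  have hmono := setIntegral_mono_on ((I1.sub I2).const_mul (s * c)) I3 hBc.isClosed.measurableSet
    hpt
  rw [hInt, integral_const_mul, integral_sub' I1 I2, integral_const_mul] at hmono
  have hA := nonpos_of_mul_nonpos_right hmono (by positivity)
  have hlevel : ∫ x in B, max (g x) 0 ≤
      L * volume.real (quotientLevel V e s κ b (2 * R) k) := by
    have hBfin : volume B ≠ ⊤ := hBc.measure_lt_top.ne
    have hm := (hopen k).measurableSet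
    calc ∫ x in B, max (g x) 0
        ≤ ∫ x in B, (quotientLevel V e s κ b (2 * R) k).indicator (fun _ => L) x := by
          refine setIntegral_mono_on (hgc.integrableOn_compact hBc)
            ((integrableOn_const hBfin).indicator hm) hBc.isClosed.measurableSet fun x hx => ?_
          by_cases hxk : k < z x
          · rw [indicator_of_mem (show x ∈ quotientLevel V e s κ b (2 * R) k from ⟨hBU hx, hxk⟩)]
            refine max_le ?_ hL.le
            have := hzL x (hBU hx)
            simp only [hg]; linarith
          · rw [indicator_of_notMem fun h => hxk h.2, max_eq_right]
            simp only [hg]; linarith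
      _ = L * volume.real (quotientLevel V e s κ b (2 * R) k) := by
          rw [setIntegral_indicator hm, inter_eq_right.2 (hlevB k hk), setIntegral_const,
            smul_eq_mul, mul_comm]
  set ψ := truncSq U g with hψ
  have hψs : tsupport ψ ⊆ B := tsupport_truncSq_subset hBc.isClosed hgB
  have hψint : ∫ x, ‖gradient ψ x‖ = 2 * ∫ x in B, max (g x) 0 * ‖gradient g x‖ := by
    rw [← setIntegral_eq_integral_of_forall_compl_eq_zero (s := B) fun x hx => by
      rw [gradient_eq_zero_of_notMem_tsupport fun h => hx (hψs h), norm_zero],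
      ← integral_const_mul]
    refine setIntegral_congr_fun hBc.isClosed.measurableSet fun x hx => ?_
    have h0 : 0 ≤ 2 * max (g x) 0 := by positivity
    simp only [hψ]
    rw [gradient_truncSq hUo hgd (hBU hx), norm_smul, Real.norm_of_nonneg h0, mul_assoc]
  have hfinal := hsob ψ (contDiff_truncSq hUo hgd hBc.isClosed hBU hgB)
    (HasCompactSupport.of_support_subset_isCompact hBc ((subset_tsupport _).trans hψs))
    ((l - k) ^ 2) (by have : 0 < l - k := by linarith
                      positivity)
  have hθ : 0 ≤ 1 - 1 / (n : ℝ) := by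
    have hn' : (2 : ℝ) ≤ n := by exact_mod_cast hn
    rw [sub_nonneg, div_le_one (by linarith)]; linarith
  have hsubset : quotientLevel V e s κ b (2 * R) l ⊆ {x | (l - k) ^ 2 ≤ ψ x} := fun x hx => by
    have hxl : l < z x := hx.2
    change (l - k) ^ 2 ≤ ψ x
    rw [hψ, truncSq, indicator_of_mem hx.1]
    have : l - k ≤ max (g x) 0 := le_trans (by simp only [hg]; linarith) (le_max_left _ _)
    exact pow_le_pow_left₀ (by linarith) this 2
  have hfin : volume {x | (l - k) ^ 2 ≤ ψ x} ≠ ⊤ := by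
    refine (measure_mono_top (s₂ := B) fun x hx => hψs (subset_tsupport _ ?_)).mt
      hBc.measure_lt_top.ne
    have h1 : (l - k) ^ 2 ≤ ψ x := hx
    have : 0 < l - k := by linarith
    have : 0 < ψ x := lt_of_lt_of_le (by positivity) h1
    exact this.ne'
  have hvol : volume.real (quotientLevel V e s κ b (2 * R) l) ≤
      volume.real {x | (l - k) ^ 2 ≤ ψ x} := measureReal_mono hsubset hfin
  calc (l - k) ^ 2 * volume.real (quotientLevel V e s κ b (2 * R) l) ^ (1 - 1 / (n : ℝ))
      ≤ (l - k) ^ 2 * volume.real {x | (l - k) ^ 2 ≤ ψ x} ^ (1 - 1 / (n : ℝ)) := by gcongr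
    _ ≤ CS * ∫ x, ‖gradient ψ x‖ := hfinal
    _ = CS * (2 * ∫ x in B, max (g x) 0 * ‖gradient g x‖) := by rw [hψint]
    _ ≤ CS * (2 * (2 * L * (Lam / lam + 1) / R *
          (L * volume.real (quotientLevel V e s κ b (2 * R) k)))) := by
        gcongr
        refine (sub_nonpos.1 hA).trans ?_
        gcongr
    _ = _ := by ring

end DifferenceQuotient

/-! ### The gradient of a bounded solution on a large ball -/

section LargeBall

variable {n : ℕ} {N : MinkowskiNorm n} {p : ℝ}

/-- A bounded `p`-harmonic function with bounded gradient on a sufficiently large ball has small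
gradient at the centre. -/
theorem exists_radius_norm_gradient_le (N : MinkowskiNorm n) (hn : 2 ≤ n) (hp : 1 < p)
    {K L κ : ℝ} (hK : 0 < K) (hL : 0 < L) (hκ : 0 < κ) :
    ∃ R : ℝ, 0 < R ∧ ∀ V : En n → ℝ, IsPHarmonicOn N p (ball 0 (3 * R)) V →
      (∀ x ∈ ball (0 : En n) (3 * R), |V x| ≤ K) →
      (∀ x ∈ ball (0 : En n) (3 * R), ‖gradient V x‖ ≤ L) → ‖gradient V 0‖ ≤ 2 * κ := by
  obtain ⟨C₁, hC₁, h₁⟩ := exists_volume_gradient_ge_le N hp (L := L) hK (half_pos hκ)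
  obtain ⟨C₂, hC₂, h₂⟩ := exists_quotientLevel_bound N hn hp hL hκ
  have hn0 : (0 : ℝ) < 1 / n := by positivity
  have hn1 : 1 / (n : ℝ) < 1 := by
    have : (2 : ℝ) ≤ n := by exact_mod_cast hn
    rw [div_lt_one (by linarith)]; linarith
  set ε : ℝ := κ ^ 2 * ((1 / 4 : ℝ) ^ (1 / (1 - (1 - 1 / (n : ℝ))))) ^ (1 - 1 / (n : ℝ)) with hε
  have hεpos : 0 < ε := by positivity
  have htend : Tendsto (fun R : ℝ => 4 * C₂ * C₁ ^ (1 / (n : ℝ)) * R ^ (-(1 / (n : ℝ)))) atTop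
      (𝓝 0) := by
    simpa using (tendsto_rpow_neg_atTop hn0).const_mul (4 * C₂ * C₁ ^ (1 / (n : ℝ)))
  obtain ⟨R, hRε, hR⟩ := ((htend.eventually_le_const hεpos).and (eventually_gt_atTop 0)).exists
  refine ⟨R, hR, fun V hV hVK hVL => ?_⟩
  have hsmall : 4 * (C₂ / R) * (C₁ * (R ^ n / R)) ^ (1 / (n : ℝ)) ≤ ε := by
    refine le_of_eq_of_le ?_ hRε
    have hRn : (R ^ n) ^ (1 / (n : ℝ)) = R := by
      rw [one_div, Real.pow_rpow_inv_natCast hR.le (by omega)]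
    rw [Real.mul_rpow hC₁.le (by positivity), Real.div_rpow (by positivity) hR.le, hRn,
      Real.rpow_neg hR.le]
    field_simp
  have hdir : ∀ e : En n, ‖e‖ = 1 → ⟪gradient V 0, e⟫ ≤ 2 * κ := fun e he => by
    have hsub : closedBall (0 : En n) (2 * R) ⊆ ball 0 (3 * R) :=
      closedBall_subset_ball (by linarith)
    have huc := (isCompact_closedBall (0 : En n) (2 * R)).uniformContinuousOn_of_continuous
      ((hV.1.continuousOn_gradient isOpen_ball).mono hsub)
    obtain ⟨δ, hδ, hcont⟩ := Metric.uniformContinuousOn_iff_le.1 huc (κ / 4) (by positivity)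
    have hd : DifferentiableAt ℝ V 0 :=
      (hV.1.differentiableOn (by simp)).differentiableAt
        (isOpen_ball.mem_nhds (mem_ball_self (by positivity)))
    refine inner_gradient_le_of_eventually_slope_le hd ?_
    filter_upwards [Ioo_mem_nhdsGT (lt_min hδ hR)] with s hs
    have hs0 : 0 < s := hs.1
    have hsR : s ≤ R := (hs.2.trans_le (min_le_right _ _)).le
    obtain ⟨hopen, hsub', hlev⟩ := h₂ R hR V hV hVL e s he hs0 hsR fun x hx y hy => by
      have hx' : ‖x‖ ≤ R := by simpa using hx
      rw [← dist_eq_norm]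
      refine hcont y ?_ x ?_ ?_
      · rw [mem_closedBall_zero_iff]
        have := norm_add_le (y - x) x
        rw [sub_add_cancel] at this; linarith
      · rw [mem_closedBall_zero_iff]; linarith
      · rw [dist_eq_norm]; exact hy.trans (hs.2.trans_le (min_le_left _ _)).le
    have hfin : ∀ k, volume (quotientLevel V e s κ (L / R ^ 2) (2 * R) k) ≠ ⊤ := fun k =>
      ((measure_mono inter_subset_left).trans_lt measure_ball_lt_top).ne
    have hzero := stampacchia_iteration
      (a := fun k => volume.real (quotientLevel V e s κ (L / R ^ 2) (2 * R) k))
      (fun k l hkl => measureReal_mono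
        (inter_subset_inter_right _ (preimage_mono (Ioi_subset_Ioi hkl))) (hfin k))
      (fun _ => measureReal_nonneg) (θ := 1 - 1 / (n : ℝ)) (M := C₂ / R) (by linarith)
      (by linarith) hκ (by positivity) hlev (by
        refine le_trans ?_ hsmall
        rw [sub_sub_cancel]
        gcongr
        refine (measureReal_mono (hsub' 0 le_rfl) ?_).trans (h₁ R hR V hV hVK hVL)
        exact ((measure_mono inter_subset_left).trans_lt measure_closedBall_lt_top).ne)
    have hempty : quotientLevel V e s κ (L / R ^ 2) (2 * R) κ = ∅ :=
      (hopen κ).eq_empty_of_measure_zero ((measureReal_eq_zero_iff (hfin κ)).1 hzero)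
    by_contra hlt
    have hmem : (0 : En n) ∈ quotientLevel V e s κ (L / R ^ 2) (2 * R) κ := by
      refine ⟨mem_ball_self (by positivity), ?_⟩
      change κ < quotientBarrier V e s κ (L / R ^ 2) 0
      simp only [quotientBarrier, norm_zero]
      push Not at hlt
      linarith
    rw [hempty] at hmem
    exact hmem
  rcases eq_or_ne (gradient V 0) 0 with h0 | h0
  · rw [h0, norm_zero]; positivity
  · have h := hdir (‖gradient V 0‖⁻¹ • gradient V 0) (norm_smul_inv_norm h0)
    rwa [real_inner_smul_right, real_inner_self_eq_norm_sq, sq, inv_mul_cancel_left₀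
      (norm_ne_zero_iff.2 h0)] at h

/-- The logarithmic gradient of a positive `p`-harmonic function on an exterior domain which
vanishes at infinity tends to zero. -/
theorem IsPHarmonicOn.eventually_norm_gradient_le (hp : 1 < p) (hpn : p < n) {U : Set (En n)}
    (hU : IsOpen U) {R₀ : ℝ} (hR0 : 0 < R₀) (hR : ∀ x, R₀ ≤ ‖x‖ → x ∈ U) {v : En n → ℝ}
    (h : IsPHarmonicOn N p U v) (hpos : ∀ x ∈ U, 0 < v x)
    (hlim : Tendsto v (cocompact (En n)) (𝓝 0)) {κ : ℝ} (hκ : 0 < κ) :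
    ∀ᶠ x in cocompact (En n), ‖gradient v x‖ ≤ 2 * κ * v x := by
  have hn : 2 ≤ n := by
    have : (1 : ℝ) < n := hp.trans hpn
    exact_mod_cast this
  obtain ⟨C, hC, hgrad⟩ := h.exists_norm_gradient_le (by omega) hp hU hR0 hR hpos hlim
  obtain ⟨K, hK, hharnack⟩ := h.exists_harnack hp hpn hU hR0 hR hpos hlim
  obtain ⟨R, hRpos, hloc⟩ := exists_radius_norm_gradient_le N hn hp hK (mul_pos hC hK) hκ
  filter_upwards [(tendsto_norm_cocompact_atTop (E := En n)).eventually_ge_atTop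
    (6 * R + 2 * (R₀ + 1))] with x hx
  have hxpos : 0 < v x := hpos x (hR x (by linarith))
  have hshift : ∀ y ∈ ball (0 : En n) (3 * R), ‖x‖ / 2 ≤ ‖y + x‖ ∧ R₀ + 1 ≤ ‖y + x‖ :=
    fun y hy => by
      have hy' : ‖y‖ < 3 * R := by simpa using hy
      have := norm_sub_le (y + x) y
      rw [add_sub_cancel_left] at this
      constructor <;> linarith
  have hval : ∀ y ∈ ball (0 : En n) (3 * R), 0 < v (y + x) ∧ v (y + x) ≤ K * v x := fun y hy =>
    ⟨hpos _ (hR _ (by linarith [(hshift y hy).2])),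
      hharnack x (y + x) (by linarith) (by linarith [(hshift y hy).2]) (hshift y hy).1⟩
  have hg : ∀ y, gradient (fun z => (v x)⁻¹ * v (z + x)) y = (v x)⁻¹ • gradient v (y + x) :=
    fun y => by
      rw [gradient_const_mul' (fun z => v (z + x)) (v x)⁻¹, gradient_comp_add_right']
  have hres := hloc (fun y => (v x)⁻¹ * v (y + x))
    (((h.comp_add_right x).const_mul (inv_pos.2 hxpos)).mono fun y hy =>
      hR _ (by linarith [(hshift y hy).2]))
    (fun y hy => by
      rw [abs_of_pos (mul_pos (inv_pos.2 hxpos) (hval y hy).1), inv_mul_le_iff₀ hxpos, mul_comm]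
      exact (hval y hy).2)
    (fun y hy => by
      rw [hg, norm_smul, norm_inv, Real.norm_of_nonneg hxpos.le, inv_mul_le_iff₀ hxpos]
      calc ‖gradient v (y + x)‖ ≤ C * v (y + x) := hgrad _ (hshift y hy).2
        _ ≤ C * (K * v x) := by gcongr; exact (hval y hy).2
        _ = v x * (C * K) := by ring)
  rwa [hg, zero_add, norm_smul, norm_inv, Real.norm_of_nonneg hxpos.le, inv_mul_le_iff₀ hxpos,
    mul_comm] at hres

end LargeBall

/-- For the anisotropic `p`-capacitary potential `v_p`,
`F(∇v_p)/v_p → 0` at infinity. -/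
theorem statement7 (n : ℕ) (N : MinkowskiNorm n)
    (Ω : Set (En n)) (hΩ : IsOpen Ω) (hsb : HasSmoothBoundary Ω)
    (hbd : Bornology.IsBounded Ωᶜ)
    (p : ℝ) (hp1 : 1 < p) (hpn : p < n)
    (v : En n → ℝ) (hpos : ∀ x ∈ closure Ω, 0 < v x)
    (hC1 : ContDiffOn ℝ 1 v (closure Ω))
    (hsol : IsWeakPHarmonic N Ω p v)
    (hbc : ∀ x ∈ frontier Ω, v x = 1)
    (hlim : Tendsto v (cocompact (En n)) (𝓝 0)) :
    Tendsto (fun x => N.F (gradient v x) / v x) (cocompact (En n)) (𝓝 0) := by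
  obtain ⟨r, hr⟩ := hbd.subset_ball (0 : En n)
  have hR : ∀ x : En n, max r 1 ≤ ‖x‖ → x ∈ Ω := fun x hx => by
    by_contra hxΩ
    have : ‖x‖ < r := by simpa using hr hxΩ
    exact absurd ((le_max_left r 1).trans hx) (not_le.2 this)
  have hR0 : 0 < max r 1 := lt_max_of_lt_right one_pos
  have hharm := hsol.isPHarmonicOn hp1 hΩ (hC1.mono subset_closure)
  obtain ⟨_, c, _, hc, hN⟩ := N.exists_norm_equiv
  refine Metric.tendsto_nhds.2 fun ε hε => ?_
  filter_upwards [hharm.eventually_norm_gradient_le hp1 hpn hΩ hR0 hR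
    (fun x hx => hpos x (subset_closure hx)) hlim (κ := ε / (4 * c)) (by positivity),
    (tendsto_norm_cocompact_atTop (E := En n)).eventually_ge_atTop (max r 1)] with x hx hxR
  have hvx : 0 < v x := hpos x (subset_closure (hR x hxR))
  rw [dist_zero_right, Real.norm_of_nonneg (div_nonneg (N.nonneg _) hvx.le), div_lt_iff₀ hvx]
  calc N.F (gradient v x) ≤ c * ‖gradient v x‖ := (hN _).2
    _ ≤ c * (2 * (ε / (4 * c)) * v x) := by gcongr
    _ = ε / 2 * v x := by field_simp; ring
    _ < ε * v x := by gcongr; linarith
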